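/- Let X be a Banach space of analytic functions on 𝔻 in which the analytic polynomials are dense, with limsup_{n→∞} ‖z^n‖_X^{1/n} ≤ 1, and which is continuously embedded in H², and suppose the Cauchy dual X' is continuously embedded in H^p for some p > 0. Then for every inner function ϑ the set X' ∩ ϑ𝒩⁺ := {f ∈ X' : f/ϑ ∈ 𝒩⁺} is weak-star closed in X'. -/

import Mathlib

open MeasureTheory Complex Filter Set Metric Polynomial

noncomputable section

/-- Normalized arc-length measure on the unit circle 𝕋, realized on the
parameter interval `(0, 2π]` via `θ ↦ e^{iθ}`. -/
def arcM : Measure ℝ :=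
  (ENNReal.ofReal (2 * Real.pi))⁻¹ • (volume.restrict (Set.Ioc 0 (2 * Real.pi)))

/-- The open unit disc 𝔻 ⊆ ℂ. -/
def uDisc : Set ℂ := Metric.ball 0 1

/-- The unit circle 𝕋 ⊆ ℂ. -/
def uCircle : Set ℂ := Metric.sphere 0 1

/-- The boundary point `e^{iθ}`. -/
def bpt (θ : ℝ) : ℂ := Complex.exp (θ * Complex.I)

/-- `f` is analytic on the open unit disc. -/
def AnalyticOnDisc (f : ℂ → ℂ) : Prop := DifferentiableOn ℂ f uDisc

/-- The integral mean `∫_𝕋 |f(rζ)|^p dm(ζ)`. -/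
def hMean (p : ℝ) (f : ℂ → ℂ) (r : ℝ) : ℝ := ∫ θ, ‖f ((r : ℂ) * bpt θ)‖ ^ p ∂arcM

/-- Membership in the Hardy space `H^p`, `0 < p < ∞`. -/
def MemHp (p : ℝ) (f : ℂ → ℂ) : Prop :=
  AnalyticOnDisc f ∧ BddAbove (hMean p f '' Set.Ioo 0 1)

/-- The Hardy space (quasi-)norm `‖f‖_{H^p} = (sup_{0<r<1} ∫_𝕋 |f(rζ)|^p dm)^{min(1,1/p)}`. -/
def hardyNorm (p : ℝ) (f : ℂ → ℂ) : ℝ :=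
  sSup (hMean p f '' Set.Ioo 0 1) ^ min 1 (1 / p)

/-- Membership in `H^∞`: bounded analytic functions on 𝔻. -/
def MemHinf (f : ℂ → ℂ) : Prop :=
  AnalyticOnDisc f ∧ ∃ C : ℝ, ∀ z ∈ uDisc, ‖f z‖ ≤ C

/-- `F` is (a representative of) the boundary function of `f` : radial limits a.e. on 𝕋. -/
def BoundaryFn (f : ℂ → ℂ) (F : ℝ → ℂ) : Prop :=
  ∀ᵐ θ ∂arcM, Filter.Tendsto (fun r : ℝ => f ((r : ℂ) * bpt θ))
    (nhdsWithin 1 (Set.Iio 1)) (nhds (F θ))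

/-- `ϑ` is an inner function: bounded analytic with unimodular boundary values a.e. -/
def IsInner (ϑ : ℂ → ℂ) : Prop :=
  MemHinf ϑ ∧ ∃ Θ : ℝ → ℂ, BoundaryFn ϑ Θ ∧ ∀ᵐ θ ∂arcM, ‖Θ θ‖ = 1

/-- The boundary function of `f` lies in `ϑ ⋅ conj(H^p_0)`. -/
def PseudoCont (p : ℝ) (ϑ f : ℂ → ℂ) : Prop :=
  ∃ F Θ G : ℝ → ℂ, ∃ g : ℂ → ℂ,
    BoundaryFn f F ∧ BoundaryFn ϑ Θ ∧ MemHp p g ∧ g 0 = 0 ∧ BoundaryFn g G ∧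
    ∀ᵐ θ ∂arcM, F θ = Θ θ * (starRingEnd ℂ) (G θ)

/-- The boundary function of `f` lies in `ϑ ⋅ conj(H^∞_0)`. -/
def PseudoContInf (ϑ f : ℂ → ℂ) : Prop :=
  ∃ F Θ G : ℝ → ℂ, ∃ g : ℂ → ℂ,
    BoundaryFn f F ∧ BoundaryFn ϑ Θ ∧ MemHinf g ∧ g 0 = 0 ∧ BoundaryFn g G ∧
    ∀ᵐ θ ∂arcM, F θ = Θ θ * (starRingEnd ℂ) (G θ)

/-- `f` extends analytically across the boundary set `S ⊆ 𝕋`. -/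
def ExtendsAcross (f : ℂ → ℂ) (S : Set ℂ) : Prop :=
  ∃ U : Set ℂ, ∃ g : ℂ → ℂ, IsOpen U ∧ S ⊆ U ∧
    DifferentiableOn ℂ g (uDisc ∪ U) ∧ Set.EqOn g f uDisc

/-- The boundary spectrum `σ(ϑ)`: the points of 𝕋 across which `ϑ` admits no
analytic continuation. -/
def bSpectrum (ϑ : ℂ → ℂ) : Set ℂ := {ζ | ζ ∈ uCircle ∧ ¬ ExtendsAcross ϑ {ζ}}

/-- Membership in the space `K^p_ϑ` of pseudocontinuable functions, `0 < p < ∞`: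
`f ∈ H^p`, the boundary function of `f` lies in `ϑ ⋅ conj(H^p_0)`, and `f`
continues analytically across `𝕋 ∖ σ(ϑ)`. -/
def MemKp (p : ℝ) (ϑ f : ℂ → ℂ) : Prop :=
  MemHp p f ∧ PseudoCont p ϑ f ∧ ExtendsAcross f (uCircle \ bSpectrum ϑ)

/-- Membership in `K^∞_ϑ = H^∞ ∩ ϑ ⋅ conj(H^∞_0)`. -/
def MemKinf (ϑ f : ℂ → ℂ) : Prop := MemHinf f ∧ PseudoContInf ϑ f

/-- The backward shift `f ↦ (f - f(0))/z`. -/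
def bShift (f : ℂ → ℂ) : ℂ → ℂ :=
  fun z => if z = 0 then deriv f 0 else (f z - f 0) / z

/-- `X ∩ K^p_ϑ` is dense in `K^p_ϑ` in the `H^p` metric. -/
def DenseInKp (p : ℝ) (ϑ : ℂ → ℂ) (X : Set (ℂ → ℂ)) : Prop :=
  ∀ f : ℂ → ℂ, MemKp p ϑ f → ∀ ε > (0 : ℝ), ∃ g ∈ X, MemKp p ϑ g ∧
    hardyNorm p (fun z => f z - g z) < ε

/-- `X ∩ K^∞_ϑ` is dense in `K^∞_ϑ` in the weak-star topology inherited from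
`L^∞(𝕋, m) = (L¹(𝕋, m))^*`. -/
def WStarDenseKinf (ϑ : ℂ → ℂ) (X : Set (ℂ → ℂ)) : Prop :=
  ∀ f : ℂ → ℂ, MemKinf ϑ f → ∀ F : ℝ → ℂ, BoundaryFn f F →
    ∀ (n : ℕ) (h : Fin n → ℝ → ℂ), (∀ i, Integrable (h i) arcM) → ∀ ε > (0 : ℝ),
      ∃ g ∈ X, MemKinf ϑ g ∧ ∃ G : ℝ → ℂ, BoundaryFn g G ∧
        ∀ i, ‖∫ θ, (F θ - G θ) * h i θ ∂arcM‖ < ε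

/-- The Cauchy dual function `𝓛(Λ)(z) = ∑_n conj(Λ(ζ ↦ ζ^n)) zⁿ` associated to a bounded
functional `Λ` on `X`; here `e n ∈ X` represents the monomial `z ↦ zⁿ`. -/
def cauchyDualFn {X : Type*} [NormedAddCommGroup X] [NormedSpace ℂ X]
    (e : ℕ → X) (Λ : X →L[ℂ] ℂ) : ℂ → ℂ :=
  fun z => ∑' n : ℕ, (starRingEnd ℂ) (Λ (e n)) * z ^ n

/-- The weak-star closure of a set of bounded functionals on `X`: `Λ` belongs to the
closure iff every basic weak-star neighborhood of `Λ` meets the set. -/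
def wstarClosure {X : Type*} [NormedAddCommGroup X] [NormedSpace ℂ X]
    (S : Set (X →L[ℂ] ℂ)) : Set (X →L[ℂ] ℂ) :=
  {Λ | ∀ F : Finset X, ∀ ε > (0 : ℝ), ∃ Λ' ∈ S, ∀ x ∈ F, ‖Λ x - Λ' x‖ < ε}

/-- The set of functionals on `X` whose Cauchy dual function is an analytic polynomial
multiple of `ϑ`. -/
def polyMultiples {X : Type*} [NormedAddCommGroup X] [NormedSpace ℂ X]
    (e : ℕ → X) (ϑ : ℂ → ℂ) : Set (X →L[ℂ] ℂ) :=
  {Λ | ∃ q : Polynomial ℂ, cauchyDualFn e Λ = fun z => ϑ z * q.eval z}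

/-- The `(P)`-property of the pair `(X, ϑ)`: `[ϑ]_{X'} ∩ H² ⊆ ϑ H²`, i.e. every element of
the weak-star closure in the Cauchy dual `X'` of the polynomial multiples of `ϑ` which lies
in `H²` is divisible by `ϑ` in `H²`. -/
def PProperty {X : Type*} [NormedAddCommGroup X] [NormedSpace ℂ X]
    (e : ℕ → X) (ϑ : ℂ → ℂ) : Prop :=
  ∀ Λ ∈ wstarClosure (polyMultiples e ϑ), MemHp 2 (cauchyDualFn e Λ) →
    ∃ h : ℂ → ℂ, MemHp 2 h ∧ ∀ z ∈ uDisc, cauchyDualFn e Λ z = ϑ z * h z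

/-- Membership in the model space `K²_ϑ = H² ∩ ϑ ⋅ conj(H²_0)`. -/
def MemK2 (ϑ f : ℂ → ℂ) : Prop := MemHp 2 f ∧ PseudoCont 2 ϑ f

/-- `F` is an outer function: `F(z) = c exp(∫_𝕋 (ζ+z)/(ζ-z) log w(ζ) dm(ζ))` for a
unimodular constant `c` and a nonnegative `w` on 𝕋 with `log w ∈ L¹(𝕋, m)`. -/
def IsOuter (F : ℂ → ℂ) : Prop :=
  ∃ (c : ℂ) (w : ℝ → ℝ), ‖c‖ = 1 ∧ (∀ θ, 0 ≤ w θ) ∧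
    Integrable (fun θ => Real.log (w θ)) arcM ∧
    ∀ z ∈ uDisc, F z =
      c * Complex.exp (∫ θ, ((bpt θ + z) / (bpt θ - z)) * (Real.log (w θ) : ℂ) ∂arcM)

/-- `h` belongs to the Smirnov class `𝒩⁺`: `h` is analytic on 𝔻 and `h = u/v` with
`u, v ∈ H^∞` and `v` outer. -/
def MemSmirnov (h : ℂ → ℂ) : Prop :=
  AnalyticOnDisc h ∧ ∃ u v : ℂ → ℂ, MemHinf u ∧ MemHinf v ∧ IsOuter v ∧
    ∀ z ∈ uDisc, h z * v z = u z


/-- Poisson kernel. -/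
def PK (z : ℂ) (θ : ℝ) : ℝ := ((bpt θ + z) / (bpt θ - z)).re

theorem bpt_eq (θ : ℝ) : bpt θ = circleMap 0 1 θ := by simp [bpt, circleMap]

theorem continuous_bpt : Continuous bpt := by
  unfold bpt; fun_prop

theorem norm_bpt (θ : ℝ) : ‖bpt θ‖ = 1 := by
  simp [bpt, Complex.norm_exp]

theorem bpt_periodic (θ : ℝ) : bpt (θ + 2 * Real.pi) = bpt θ := by
  rw [bpt_eq, bpt_eq]; exact periodic_circleMap 0 1 θ

theorem bpt_sub_ne {z : ℂ} (hz : z ∈ uDisc) (θ : ℝ) : bpt θ - z ≠ 0 := by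
  intro h
  have h1 : bpt θ = z := sub_eq_zero.1 h
  have h2 : ‖z‖ < 1 := by simpa [uDisc] using hz
  rw [← h1, norm_bpt] at h2
  exact lt_irrefl _ h2

theorem integral_arcM {E : Type*} [NormedAddCommGroup E] [NormedSpace ℝ E] (f : ℝ → E) :
    ∫ θ, f θ ∂arcM = (2 * Real.pi)⁻¹ • ∫ θ in (0)..(2 * Real.pi), f θ := by
  have hp : 0 ≤ 2 * Real.pi := by positivity
  rw [arcM, integral_smul_measure, intervalIntegral.integral_of_le hp, ENNReal.toReal_inv,
    ENNReal.toReal_ofReal hp]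

theorem circleAverage_arcM {E : Type*} [NormedAddCommGroup E] [NormedSpace ℝ E] (f : ℂ → E) :
    Real.circleAverage f 0 1 = ∫ θ, f (bpt θ) ∂arcM := by
  rw [integral_arcM, Real.circleAverage_def]
  simp only [bpt_eq]

instance arcM_prob : IsProbabilityMeasure arcM := by
  constructor
  have hp : 0 < 2 * Real.pi := by positivity
  simp only [arcM, Measure.smul_apply, Measure.restrict_apply MeasurableSet.univ, univ_inter,
    Real.volume_Ioc, sub_zero, smul_eq_mul]
  exact ENNReal.inv_mul_cancel (by simpa using hp) ENNReal.ofReal_ne_top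

theorem arcM_integrable_of_cont {E : Type*} [NormedAddCommGroup E] {f : ℝ → E}
    (hf : Continuous f) : Integrable f arcM := by
  unfold arcM
  apply Integrable.smul_measure
  · exact (hf.locallyIntegrable.integrableOn_isCompact isCompact_Icc).mono_set Ioc_subset_Icc_self
  · have hp : 0 < 2 * Real.pi := by positivity
    simpa using hp

theorem continuous_HK {z : ℂ} (hz : z ∈ uDisc) :
    Continuous (fun θ => (bpt θ + z) / (bpt θ - z)) :=
  (continuous_bpt.add continuous_const).div (continuous_bpt.sub continuous_const)
    (bpt_sub_ne hz)

theorem continuous_PK {z : ℂ} (hz : z ∈ uDisc) : Continuous (PK z) :=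
  Complex.continuous_re.comp (continuous_HK hz)

theorem PK_eq (z : ℂ) (θ : ℝ) : PK z θ = (1 - ‖z‖ ^ 2) / ‖bpt θ - z‖ ^ 2 := by
  have h := congrFun (poissonKernel_eq_re_herglotzRieszKernel (c := 0) (w := z)) (bpt θ)
  simp only [poissonKernel_def, herglotzRieszKernel_def, sub_zero, Function.comp,
    norm_bpt] at h
  rw [PK, ← h, one_pow]

theorem PK_nonneg {z : ℂ} (hz : z ∈ uDisc) (θ : ℝ) : 0 ≤ PK z θ := by
  have h2 : ‖z‖ < 1 := by simpa [uDisc] using hz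
  rw [PK_eq]
  have : ‖z‖ ^ 2 ≤ 1 := pow_le_one₀ (norm_nonneg _) h2.le
  positivity [sub_nonneg.2 this]

theorem PK_le {z : ℂ} (hz : z ∈ uDisc) (θ : ℝ) : PK z θ ≤ (1 + ‖z‖) / (1 - ‖z‖) := by
  have h := re_herglotzRieszKernel_le (c := 0) (R := 1) (z := bpt θ) (w := z)
    (by simp [norm_bpt]) hz
  simpa [PK] using h

theorem poisson_formula {f : ℂ → ℂ} (hf : DiffContOnCl ℂ f (ball 0 1)) {z : ℂ}
    (hz : z ∈ uDisc) : ∫ θ, (PK z θ : ℂ) * f (bpt θ) ∂arcM = f z := by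
  have h := hf.circleAverage_re_herglotzRieszKernel_smul (w := z) hz
  rw [circleAverage_arcM] at h
  rw [← h]
  congr 1
  ext θ
  simp [PK, herglotzRieszKernel_def]

theorem integral_PK {z : ℂ} (hz : z ∈ uDisc) : ∫ θ, PK z θ ∂arcM = 1 := by
  have h := poisson_formula (f := fun _ => 1) diffContOnCl_const hz
  simp only [mul_one] at h
  rw [integral_complex_ofReal] at h
  exact_mod_cast h

theorem mul_bpt_mem {r : ℝ} (h0 : 0 ≤ r) (h1 : r < 1) (θ : ℝ) : (r : ℂ) * bpt θ ∈ uDisc := by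
  simp [uDisc, norm_bpt, abs_of_nonneg h0, h1]

theorem PK_symm {r : ℝ} (h0 : 0 ≤ r) (θ φ : ℝ) :
    PK (r * bpt θ) φ = PK (r * bpt φ) θ := by
  rw [PK_eq, PK_eq]
  congr 1
  · simp [norm_bpt]
  · congr 1
    have key : ∀ a b : ℝ, ‖bpt a - r * bpt b‖ ^ 2 = 1 + r ^ 2 - 2 * r * Real.cos (a - b) := by
      intro a b
      rw [← Complex.normSq_eq_norm_sq, Complex.normSq_apply]
      simp only [bpt, sub_re, sub_im, exp_ofReal_mul_I_re, exp_ofReal_mul_I_im, re_ofReal_mul,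
        im_ofReal_mul, Real.cos_sub]
      have e1 := Real.sin_sq_add_cos_sq a
      have e2 := Real.sin_sq_add_cos_sq b
      linear_combination e1 + r ^ 2 * e2
    have h2 := key φ θ
    have h3 := key θ φ
    rw [show θ - φ = -(φ - θ) by ring, Real.cos_neg] at h3
    have h4 := h2.trans h3.symm
    exact (pow_left_inj₀ (norm_nonneg _) (norm_nonneg _) two_ne_zero).1 h4

theorem PK_integrable_mul {z : ℂ} (hz : z ∈ uDisc) {g : ℝ → ℝ} (hg : Integrable g arcM) :
    Integrable (fun θ => PK z θ * g θ) arcM := by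
  refine hg.bdd_mul (c := (1 + ‖z‖) / (1 - ‖z‖))
    (continuous_PK hz).aestronglyMeasurable ?_
  refine Eventually.of_forall fun θ => ?_
  rw [Real.norm_eq_abs, abs_of_nonneg (PK_nonneg hz θ)]
  exact PK_le hz θ

/-- density of trigonometric polynomials -/
theorem trig_approx {ψ : ℝ → ℝ} (hc : Continuous ψ) (hp : ∀ θ, ψ (θ + 2 * Real.pi) = ψ θ)
    {ε : ℝ} (hε : 0 < ε) :
    ∃ q : Polynomial ℂ, ∀ θ, |ψ θ - (q.eval (bpt θ)).re| ≤ ε := by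
  have hpi : 0 < 2 * Real.pi := by positivity
  haveI : Fact (0 < 2 * Real.pi) := ⟨hpi⟩
  have hper : Function.Periodic (fun θ => (ψ θ : ℂ)) (2 * Real.pi) := fun θ => by simp [hp θ]
  let F : C(AddCircle (2 * Real.pi), ℂ) :=
    ⟨hper.lift, continuous_coinduced_dom.mpr (by
      have : Continuous (fun θ => (ψ θ : ℂ)) := by fun_prop
      exact this)⟩
  have hF : ∀ θ : ℝ, F (θ : AddCircle (2 * Real.pi)) = ψ θ := fun θ => rfl
  have hmem : F ∈ (Submodule.span ℂ (Set.range (fourier (T := 2 * Real.pi)))).topologicalClosure := by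
    rw [span_fourier_closure_eq_top]; trivial
  rw [← SetLike.mem_coe, Submodule.topologicalClosure_coe, Metric.mem_closure_iff] at hmem
  obtain ⟨t, ht, hd⟩ := hmem ε hε
  have hfour : ∀ (n : ℤ) (θ : ℝ), fourier (T := 2 * Real.pi) n (θ : AddCircle (2 * Real.pi))
      = bpt θ ^ n := by
    intro n θ
    rw [fourier_coe_apply, bpt, ← Complex.exp_int_mul]
    congr 1
    have : (Real.pi : ℂ) ≠ 0 := by exact_mod_cast Real.pi_ne_zero
    push_cast
    field_simp
  have key : ∃ q1 q2 : Polynomial ℂ, ∀ θ : ℝ, t (θ : AddCircle (2 * Real.pi)) =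
      q1.eval (bpt θ) + (starRingEnd ℂ) (q2.eval (bpt θ)) := by
    refine Submodule.span_induction (p := fun t _ => ∃ q1 q2 : Polynomial ℂ, ∀ θ : ℝ,
      t (θ : AddCircle (2 * Real.pi)) = q1.eval (bpt θ) + (starRingEnd ℂ) (q2.eval (bpt θ)))
      ?_ ?_ ?_ ?_ ht
    · rintro _ ⟨n, rfl⟩
      obtain ⟨k, rfl | rfl⟩ := n.eq_nat_or_neg
      · refine ⟨X ^ k, 0, fun θ => ?_⟩
        rw [hfour]; simp
      · refine ⟨0, X ^ k, fun θ => ?_⟩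
        rw [hfour]
        have : (starRingEnd ℂ) (bpt θ) = (bpt θ)⁻¹ := by
          rw [Complex.inv_def, Complex.normSq_eq_norm_sq, norm_bpt]; simp
        simp [this]
    · exact ⟨0, 0, fun θ => by simp⟩
    · rintro x y _ _ ⟨a, b, h1⟩ ⟨c, d, h2⟩
      refine ⟨a + c, b + d, fun θ => ?_⟩
      rw [ContinuousMap.add_apply, h1, h2]; simp; ring
    · rintro c x _ ⟨a, b, h1⟩
      refine ⟨C c * a, C ((starRingEnd ℂ) c) * b, fun θ => ?_⟩
      rw [ContinuousMap.smul_apply, h1]; simp; ring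
  obtain ⟨q1, q2, hq⟩ := key
  refine ⟨q1 + q2, fun θ => ?_⟩
  have h1 : dist (F (θ : AddCircle (2 * Real.pi))) (t (θ : AddCircle (2 * Real.pi))) ≤ ε :=
    (ContinuousMap.dist_apply_le_dist _).trans hd.le
  rw [hF, hq, dist_eq_norm] at h1
  have h2 := (Complex.abs_re_le_norm _).trans h1
  simpa using h2

theorem subharm {h : ℂ → ℂ} (hh : AnalyticOnDisc h) {r : ℝ} (h0 : 0 < r) (h1 : r < 1)
    {ψ : ℝ → ℝ} (hc : Continuous ψ) (hp : ∀ θ, ψ (θ + 2 * Real.pi) = ψ θ)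
    (hb : ∀ θ, ‖h (r * bpt θ)‖ ≤ Real.exp (ψ θ)) {w : ℂ} (hw : w ∈ uDisc) :
    ‖h (r * w)‖ ≤ Real.exp (∫ θ, PK w θ * ψ θ ∂arcM) := by
  have main : ∀ ε > 0, ‖h (r * w)‖ ≤ Real.exp (∫ θ, PK w θ * ψ θ ∂arcM + ε) := by
    intro ε hε
    obtain ⟨q, hq⟩ := trig_approx hc hp (half_pos hε)
    have hdh : DiffContOnCl ℂ (fun z => h (r * z) * Complex.exp (-(q.eval z))) (ball 0 1) := by
      apply DifferentiableOn.diffContOnCl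
      rw [closure_ball _ one_ne_zero]
      apply DifferentiableOn.mul
      · refine DifferentiableOn.comp (t := uDisc) hh (by fun_prop) ?_
        intro z hz
        have hz' : ‖z‖ ≤ 1 := by simpa using hz
        simp only [uDisc, mem_ball_zero_iff, norm_mul, norm_real, Real.norm_eq_abs, abs_of_pos h0]
        nlinarith [norm_nonneg z]
      · exact (Differentiable.cexp (q.differentiable.neg)).differentiableOn
    have hle : ‖h (r * w) * Complex.exp (-(q.eval w))‖ ≤ Real.exp (ε / 2) := by
      refine Complex.norm_le_of_forall_mem_frontier_norm_le (U := ball 0 1) isBounded_ball hdh ?_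
        (subset_closure hw)
      intro z hz
      rw [frontier_ball _ one_ne_zero] at hz
      have hz' : ‖z‖ = 1 := by simpa using hz
      have hzb : z = bpt (arg z) := by
        rw [bpt]
        conv_lhs => rw [← Complex.norm_mul_exp_arg_mul_I z, hz']
        simp
      rw [hzb, norm_mul, Complex.norm_exp]
      have e1 := hb (arg z)
      have e2 := (abs_le.1 (hq (arg z))).2
      calc _ ≤ Real.exp (ψ (arg z)) * Real.exp (-(q.eval (bpt (arg z)))).re := by gcongr
        _ = Real.exp (ψ (arg z) + (-(q.eval (bpt (arg z)))).re) := (Real.exp_add _ _).symm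
        _ ≤ _ := by
          apply Real.exp_le_exp.2
          rw [neg_re]; linarith
    have hqw : (q.eval w).re = ∫ θ, PK w θ * (q.eval (bpt θ)).re ∂arcM := by
      have hd : DiffContOnCl ℂ (fun z => q.eval z) (ball 0 1) := q.differentiable.diffContOnCl
      have e := poisson_formula hd hw
      rw [← e]
      have hIntg : Integrable (fun θ => (PK w θ : ℂ) * q.eval (bpt θ)) arcM := by
        apply arcM_integrable_of_cont
        exact (continuous_ofReal.comp (continuous_PK hw)).mul (q.continuous.comp continuous_bpt)
      have := integral_re hIntg
      simp only [RCLike.re_to_complex] at this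
      rw [← this]
      congr 1
      ext θ
      simp
    have hle2 : (q.eval w).re ≤ ∫ θ, PK w θ * ψ θ ∂arcM + ε / 2 := by
      have : ∫ θ, PK w θ * ψ θ ∂arcM + ε / 2 = ∫ θ, PK w θ * (ψ θ + ε / 2) ∂arcM := by
        simp only [mul_add]
        rw [integral_add (PK_integrable_mul hw (arcM_integrable_of_cont hc))
          (PK_integrable_mul hw (integrable_const _)), integral_mul_const, integral_PK hw, one_mul]
      rw [this, hqw]
      refine integral_mono ?_ ?_ ?_
      · exact PK_integrable_mul hw (arcM_integrable_of_cont
          (Complex.continuous_re.comp (q.continuous.comp continuous_bpt)))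
      · exact PK_integrable_mul hw (arcM_integrable_of_cont (hc.add continuous_const))
      · intro θ
        have := (abs_le.1 (hq θ)).1
        exact mul_le_mul_of_nonneg_left (by linarith) (PK_nonneg hw θ)
    rw [norm_mul, Complex.norm_exp, neg_re, Real.exp_neg] at hle
    have hpos := Real.exp_pos (q.eval w).re
    calc ‖h (r * w)‖ = ‖h (r * w)‖ * (Real.exp (q.eval w).re)⁻¹ * Real.exp (q.eval w).re := by
          field_simp
      _ ≤ Real.exp (ε / 2) * Real.exp (q.eval w).re := by gcongr
      _ = Real.exp (ε / 2 + (q.eval w).re) := (Real.exp_add _ _).symm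
      _ ≤ _ := by apply Real.exp_le_exp.2; linarith
  have ht : Tendsto (fun ε : ℝ => Real.exp (∫ θ, PK w θ * ψ θ ∂arcM + ε)) (nhdsWithin 0 (Ioi 0))
      (nhds (Real.exp (∫ θ, PK w θ * ψ θ ∂arcM + 0))) := by
    apply Tendsto.mono_left _ nhdsWithin_le_nhds
    exact (Continuous.tendsto (by fun_prop) 0)
  rw [add_zero] at ht
  exact ge_of_tendsto ht (eventually_nhdsWithin_of_forall fun ε hε => main ε hε)


theorem alaoglu {𝕜 E ι : Type*} [RCLike 𝕜] [NormedAddCommGroup E] [NormedSpace 𝕜 E]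
    (U : Ultrafilter ι) (Φ : ι → E →L[𝕜] 𝕜) {K : ℝ} (hK : ∀ᶠ i in (U : Filter ι), ‖Φ i‖ ≤ K) :
    ∃ Φ0 : E →L[𝕜] 𝕜, ‖Φ0‖ ≤ K ∧
      ∀ x, Tendsto (fun i => Φ i x) (U : Filter ι) (nhds (Φ0 x)) := by
  have hc := WeakDual.isCompact_closedBall (𝕜 := 𝕜) (E := E) 0 K
  let m : ι → WeakDual 𝕜 E := fun i => StrongDual.toWeakDual (Φ i)
  have hm : WeakDual.toStrongDual ⁻¹' closedBall (0 : StrongDual 𝕜 E) K ∈ U.map m := by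
    rw [Ultrafilter.mem_map]
    filter_upwards [hK] with i hi
    simpa [m] using hi
  obtain ⟨Ψ, hΨ, hle⟩ := hc.ultrafilter_le_nhds' _ hm
  refine ⟨WeakDual.toStrongDual Ψ, by simpa using hΨ, fun x => ?_⟩
  have ht : Tendsto m U (nhds Ψ) := hle
  exact ((WeakDual.eval_continuous x).tendsto Ψ).comp ht

section KS
variable {X : Type*} [NormedAddCommGroup X] [NormedSpace ℂ X]

theorem ks_step (S : Submodule ℂ (X →L[ℂ] ℂ))
    (H : ∀ (R : ℝ) (U : Ultrafilter (X →L[ℂ] ℂ)) (Λ : X →L[ℂ] ℂ),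
      (∀ᶠ Φ in (U : Filter (X →L[ℂ] ℂ)), Φ ∈ S ∧ ‖Φ‖ ≤ R) →
      (∀ x, Tendsto (fun Φ : X →L[ℂ] ℂ => Φ x) U (nhds (Λ x))) → Λ ∈ S)
    (Λ0 : X →L[ℂ] ℂ) (G : Finset X) (n : ℕ)
    (hG : ∀ Φ : X →L[ℂ] ℂ, Λ0 - Φ ∈ S → ‖Φ‖ ≤ n → ∃ x ∈ G, 1 < ‖Φ x‖) :
    ∃ G' : Finset X, G ⊆ G' ∧ (∀ x ∈ G', x ∈ G ∨ n * ‖x‖ ≤ 1) ∧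
      ∀ Φ : X →L[ℂ] ℂ, Λ0 - Φ ∈ S → ‖Φ‖ ≤ (n + 1 : ℕ) → ∃ x ∈ G', 1 < ‖Φ x‖ := by
  classical
  by_contra! hcon
  let ι := Finset {x : X // n * ‖x‖ ≤ 1}
  have h1 : ∀ F : ι, ∃ Φ : X →L[ℂ] ℂ, Λ0 - Φ ∈ S ∧ ‖Φ‖ ≤ (n + 1 : ℕ) ∧
      ∀ x ∈ G ∪ F.image Subtype.val, ‖Φ x‖ ≤ 1 := by
    intro F
    refine hcon _ Finset.subset_union_left ?_
    intro x hx
    rcases Finset.mem_union.1 hx with hx | hx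
    · exact Or.inl hx
    · obtain ⟨y, _, rfl⟩ := Finset.mem_image.1 hx
      exact Or.inr y.2
  choose Φ hΦS hΦn hΦ1 using h1
  let U : Ultrafilter ι := Ultrafilter.of atTop
  have hU : (U : Filter ι) ≤ atTop := Ultrafilter.of_le _
  obtain ⟨Φ0, hn0, ht⟩ := alaoglu U Φ (K := (n + 1 : ℕ)) (Eventually.of_forall hΦn)
  have hS0 : Λ0 - Φ0 ∈ S := by
    refine H (‖Λ0‖ + (n + 1 : ℕ)) (U.map fun i => Λ0 - Φ i) _ ?_ ?_
    · rw [Ultrafilter.coe_map, eventually_map]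
      refine Eventually.of_forall fun i => ⟨hΦS i, (norm_sub_le _ _).trans ?_⟩
      gcongr
      exact hΦn i
    · intro x
      rw [Ultrafilter.coe_map, tendsto_map'_iff]
      exact tendsto_const_nhds.sub (ht x)
  have hG0 : ∀ x ∈ G, ‖Φ0 x‖ ≤ 1 := fun x hx =>
    le_of_tendsto (ht x).norm (Eventually.of_forall fun F => hΦ1 F x
      (Finset.mem_union_left _ hx))
  have hb : ∀ x : X, n * ‖x‖ ≤ 1 → ‖Φ0 x‖ ≤ 1 := by
    intro x hx
    refine le_of_tendsto (ht x).norm ?_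
    have : ∀ᶠ F : ι in atTop, ‖Φ F x‖ ≤ 1 := by
      filter_upwards [eventually_ge_atTop ({⟨x, hx⟩} : ι)] with F hF
      refine hΦ1 F x (Finset.mem_union_right _ (Finset.mem_image.2 ⟨⟨x, hx⟩, ?_, rfl⟩))
      exact hF (Finset.mem_singleton_self _)
    exact hU this
  have hle : ‖Φ0‖ ≤ n := by
    refine le_of_forall_pos_le_add fun δ hδ => ?_
    refine ContinuousLinearMap.opNorm_le_bound _ (by positivity) fun x => ?_
    rcases eq_or_ne x 0 with rfl | hx
    · simp
    have hx' : 0 < ‖x‖ := norm_pos_iff.2 hx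
    have hc : 0 < (n + δ) * ‖x‖ := by positivity
    have h2 := hb ((((n + δ) * ‖x‖)⁻¹ : ℝ) • x) (by
      rw [norm_smul, Real.norm_of_nonneg (by positivity)]
      rw [show (n : ℝ) * (((n + δ) * ‖x‖)⁻¹ * ‖x‖) = n / (n + δ) by field_simp]
      rw [div_le_one (by positivity)]; linarith)
    have h3 : Φ0 ((((n + δ) * ‖x‖)⁻¹ : ℝ) • x) = (((n + δ) * ‖x‖)⁻¹ : ℝ) • Φ0 x :=
      (Φ0.restrictScalars ℝ).map_smul _ _
    rw [h3, norm_smul, Real.norm_of_nonneg (by positivity), inv_mul_le_iff₀ hc, mul_one] at h2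
    exact h2
  obtain ⟨x, hx, h2⟩ := hG Φ0 hS0 hle
  exact absurd (hG0 x hx) (not_le.2 h2)

theorem dual_dist_span {Y ι : Type*} [NormedAddCommGroup Y] [NormedSpace ℂ Y] [Finite ι]
    (φ : Y →L[ℂ] ℂ) (L : ι → Y →L[ℂ] ℂ) {ε : ℝ} (hε : 0 ≤ ε)
    (hG : ∀ Φ : Y, (∀ i, L i Φ = 0) → ‖φ Φ‖ ≤ ε * ‖Φ‖) :
    ∃ t : Y →L[ℂ] ℂ, t.toLinearMap ∈ Submodule.span ℂ (Set.range fun i => (L i).toLinearMap) ∧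
      ‖φ - t‖ ≤ ε := by
  let N : Submodule ℂ Y := ⨅ i, LinearMap.ker (L i).toLinearMap
  have hN : ∀ Φ ∈ N, ∀ i, L i Φ = 0 := by
    intro Φ hΦ i
    exact (Submodule.mem_iInf _).1 hΦ i
  obtain ⟨g, hg, hgn⟩ := exists_extension_norm_eq N (φ.comp N.subtypeL)
  have hn : ‖φ.comp N.subtypeL‖ ≤ ε :=
    ContinuousLinearMap.opNorm_le_bound _ hε fun Φ => hG Φ (hN Φ Φ.2)
  refine ⟨φ - g, ?_, ?_⟩
  · apply mem_span_of_iInf_ker_le_ker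
    intro Φ hΦ
    have := hg ⟨Φ, hΦ⟩
    simp only [ContinuousLinearMap.comp_apply, Submodule.subtypeL_apply] at this
    simp [LinearMap.mem_ker, this]
  · rw [sub_sub_cancel, hgn]; exact hn

theorem mem_X_of_approx [CompleteSpace X] (φ : StrongDual ℂ (StrongDual ℂ X))
    (h : ∀ ε > 0, ∃ G : Finset X, ∀ Φ : X →L[ℂ] ℂ, (∀ x ∈ G, Φ x = 0) → ‖φ Φ‖ ≤ ε * ‖Φ‖) :
    ∃ x : X, ∀ Φ : X →L[ℂ] ℂ, φ Φ = Φ x := by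
  let J := NormedSpace.inclusionInDoubleDualLi (E := X) ℂ
  have hcl : IsClosed (Set.range J) := (J.isometry.isUniformInducing.isComplete_range).isClosed
  have hmem : φ ∈ closure (Set.range J) := by
    refine (Metric.mem_closure_iff (α := StrongDual ℂ (StrongDual ℂ X))).2 ?_
    intro ε hε
    obtain ⟨G, hG⟩ := h (ε / 2) (half_pos hε)
    obtain ⟨t, ht, htn⟩ := dual_dist_span (Y := StrongDual ℂ X) (ι := G) φ (fun x => J x.1)
      (half_pos hε).le (fun Φ hΦ => hG Φ fun x hx => hΦ ⟨x, hx⟩)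
    have hy : ∃ y : X, t.toLinearMap = (J y).toLinearMap := by
      refine Submodule.span_induction (p := fun t _ => ∃ y : X, t = (J y).toLinearMap)
        ?_ ?_ ?_ ?_ ht
      · rintro _ ⟨x, rfl⟩; exact ⟨x.1, rfl⟩
      · exact ⟨0, LinearMap.ext fun Φ => (map_zero (Φ : X →L[ℂ] ℂ)).symm⟩
      · rintro _ _ _ _ ⟨a, rfl⟩ ⟨b, rfl⟩; exact ⟨a + b, LinearMap.ext fun Φ => (map_add (Φ : X →L[ℂ] ℂ) a b).symm⟩
      · rintro c _ _ ⟨a, rfl⟩; exact ⟨c • a, LinearMap.ext fun Φ => (map_smul (Φ : X →L[ℂ] ℂ) c a).symm⟩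
    obtain ⟨y, hy⟩ := hy
    refine ⟨J y, ⟨y, rfl⟩, ?_⟩
    have hy' : t = J y := ContinuousLinearMap.coe_injective hy
    rw [← hy']
    have : dist φ t = ‖φ - t‖ := dist_eq_norm (E := StrongDual ℂ (StrongDual ℂ X)) φ t
    rw [this]
    linarith
  rw [hcl.closure_eq] at hmem
  obtain ⟨x, hx⟩ := hmem
  exact ⟨x, fun Φ => by rw [← hx]; rfl⟩

theorem krein_smulian [CompleteSpace X] (S : Submodule ℂ (X →L[ℂ] ℂ))
    (H : ∀ (R : ℝ) (U : Ultrafilter (X →L[ℂ] ℂ)) (Λ : X →L[ℂ] ℂ),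
      (∀ᶠ Φ in (U : Filter (X →L[ℂ] ℂ)), Φ ∈ S ∧ ‖Φ‖ ≤ R) →
      (∀ x, Tendsto (fun Φ : X →L[ℂ] ℂ => Φ x) U (nhds (Λ x))) → Λ ∈ S) :
    wstarClosure (S : Set (X →L[ℂ] ℂ)) ⊆ S := by
  classical
  intro Λ0 hΛ0
  by_contra hnot
  let P : ℕ → Finset X → Prop := fun n G =>
    ∀ Φ : X →L[ℂ] ℂ, Λ0 - Φ ∈ S → ‖Φ‖ ≤ n → ∃ x ∈ G, 1 < ‖Φ x‖
  have hstep : ∀ n G, P n G → ∃ G' : Finset X, G ⊆ G' ∧ (∀ x ∈ G', x ∈ G ∨ n * ‖x‖ ≤ 1) ∧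
      P (n + 1) G' := fun n G hG => ks_step S H Λ0 G n hG
  choose! nx hsub hnx hP using hstep
  have hP0 : P 0 ∅ := by
    intro Φ hΦ hn
    have : Φ = 0 := by simpa using hn
    rw [this, sub_zero] at hΦ
    exact absurd hΦ hnot
  let G : ℕ → Finset X := fun n => Nat.rec ∅ (fun n g => nx n g) n
  have hGs : ∀ n, G (n + 1) = nx n (G n) := fun n => rfl
  have hGP : ∀ n, P n (G n) := by
    intro n
    induction n with
    | zero => exact hP0
    | succ n ih => rw [hGs]; exact hP n _ ih
  have hmono : Monotone G := monotone_nat_of_le_succ fun n => by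
    rw [hGs]; exact hsub n _ (hGP n)
  have hsmall : ∀ n m, ∀ x ∈ G m, x ∈ G n ∨ n * ‖x‖ ≤ 1 := by
    intro n m
    induction m with
    | zero => intro x hx; exact absurd hx (Finset.notMem_empty x)
    | succ m ih =>
      intro x hx
      rcases le_total n m with hnm | hnm
      · rw [hGs] at hx
        rcases hnx m _ (hGP m) x hx with h | h
        · exact ih x h
        · right
          refine le_trans ?_ h
          gcongr
      · rcases hnm.eq_or_lt with rfl | hlt
        · rw [hGs] at hx
          rcases hnx m _ (hGP m) x hx with h | h
          · exact Or.inl h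
          · exact Or.inr h
        · exact Or.inl (hmono hlt hx)
  let D : Set X := {x | ∃ n, x ∈ G n}
  have hD : ∀ n, ∀ x ∈ D, x ∈ G n ∨ n * ‖x‖ ≤ 1 := by
    intro n x hx
    obtain ⟨m, hm⟩ := hx
    exact hsmall n m x hm
  obtain ⟨M, hM0, hM⟩ : ∃ M : ℝ, 0 ≤ M ∧ ∀ x ∈ D, ‖x‖ ≤ M := by
    refine ⟨1 + ∑ x ∈ G 1, ‖x‖, by positivity, fun x hx => ?_⟩
    rcases hD 1 x hx with h | h
    · have := Finset.single_le_sum (f := fun x : X => ‖x‖) (fun i _ => norm_nonneg i) h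
      linarith
    · have : 0 ≤ ∑ x ∈ G 1, ‖x‖ := by positivity
      simp only [Nat.cast_one, one_mul] at h; linarith
  have hbd : ∀ (Φ : X →L[ℂ] ℂ) (x : D), ‖Φ x‖ ≤ M * ‖Φ‖ := fun Φ x => by
    refine (Φ.le_opNorm x).trans ?_
    rw [mul_comm]
    exact mul_le_mul_of_nonneg_right (hM x x.2) (norm_nonneg _)
  let A : (X →L[ℂ] ℂ) →ₗ[ℂ] BoundedContinuousFunction D ℂ :=
    { toFun := fun Φ => BoundedContinuousFunction.ofNormedAddCommGroup (fun x : D => Φ x)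
        (Φ.continuous.comp continuous_subtype_val) (M * ‖Φ‖) (hbd Φ)
      map_add' := fun a b => by ext x; simp
      map_smul' := fun c a => by ext x; simp }
  have hA : ∀ Φ (x : D), A Φ x = Φ x := fun Φ x => rfl
  let V : Submodule ℂ (BoundedContinuousFunction D ℂ) := (S.map A).topologicalClosure
  have hV : A Λ0 ∉ V := by
    intro hmem
    rw [← SetLike.mem_coe, Submodule.topologicalClosure_coe, Metric.mem_closure_iff] at hmem
    obtain ⟨_, ⟨s, hs, rfl⟩, hd⟩ := hmem 1 one_pos
    obtain ⟨n, hn⟩ := exists_nat_ge ‖Λ0 - s‖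
    obtain ⟨x, hx, h1⟩ := hGP n (Λ0 - s) (by simpa using hs) hn
    have hxD : x ∈ D := ⟨n, hx⟩
    have h2 := (A (Λ0 - s)).norm_coe_le_norm ⟨x, hxD⟩
    rw [hA, map_sub] at h2
    rw [dist_eq_norm] at hd
    linarith
  have : IsClosed (V : Set (BoundedContinuousFunction D ℂ)) :=
    Submodule.isClosed_topologicalClosure _
  have hq : V.mkQ (A Λ0) ≠ 0 := by
    simpa [Submodule.mkQ_apply, Submodule.Quotient.mk_eq_zero] using hV
  obtain ⟨g, -, hg⟩ := exists_dual_vector ℂ (V.mkQ (A Λ0)) (norm_ne_zero_iff.2 hq)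
  let ψ : BoundedContinuousFunction D ℂ →L[ℂ] ℂ := g.comp V.mkQL
  have hψ0 : ψ (A Λ0) ≠ 0 := by
    change g (V.mkQ (A Λ0)) ≠ 0
    rw [hg]
    simpa using hq
  have hψS : ∀ s ∈ S, ψ (A s) = 0 := by
    intro s hs
    change g (V.mkQ (A s)) = 0
    have : V.mkQ (A s) = 0 := by
      rw [Submodule.mkQ_apply, Submodule.Quotient.mk_eq_zero]
      exact Submodule.le_topologicalClosure _ (Submodule.mem_map_of_mem hs)
    rw [this, map_zero]
  have hAn : ∀ Φ, ‖A Φ‖ ≤ M * ‖Φ‖ := fun Φ =>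
    (BoundedContinuousFunction.norm_le (by positivity)).2 (hbd Φ)
  let φ : (X →L[ℂ] ℂ) →L[ℂ] ℂ := ψ.comp (A.mkContinuous M hAn)
  have hφ : ∀ Φ, φ Φ = ψ (A Φ) := fun Φ => rfl
  obtain ⟨x0, hx0⟩ := mem_X_of_approx φ (by
    intro ε hε
    obtain ⟨n, hn⟩ := exists_nat_gt (‖ψ‖ / ε)
    have hn0 : (0 : ℝ) < n := lt_of_le_of_lt (by positivity) hn
    refine ⟨G n, fun Φ hΦ => ?_⟩
    have h1 : ‖A Φ‖ ≤ (n : ℝ)⁻¹ * ‖Φ‖ := by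
      refine (BoundedContinuousFunction.norm_le (by positivity)).2 fun x => ?_
      rw [hA]
      rcases hD n x x.2 with h | h
      · rw [hΦ _ h, norm_zero]; positivity
      · refine (Φ.le_opNorm x).trans ?_
        rw [mul_comm]
        gcongr
        rw [← mul_one (n : ℝ)⁻¹, ← div_eq_inv_mul, le_div_iff₀ hn0, mul_comm]
        exact h
    calc ‖φ Φ‖ ≤ ‖ψ‖ * ‖A Φ‖ := by rw [hφ]; exact ψ.le_opNorm _
      _ ≤ ‖ψ‖ * ((n : ℝ)⁻¹ * ‖Φ‖) := by gcongr
      _ = (‖ψ‖ / n) * ‖Φ‖ := by ring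
      _ ≤ ε * ‖Φ‖ := by
        gcongr
        rw [div_le_iff₀ hn0]
        rw [div_lt_iff₀ hε] at hn
        linarith)
  have hne : Λ0 x0 ≠ 0 := by rw [← hx0, hφ]; exact hψ0
  obtain ⟨s, hs, h⟩ := hΛ0 {x0} ‖Λ0 x0‖ (norm_pos_iff.2 hne)
  have h1 := h x0 (Finset.mem_singleton_self _)
  rw [← hx0 s, hφ, hψS s hs, sub_zero] at h1
  exact lt_irrefl _ h1
end KS


/-- Herglotz integral. -/
def HI (g : ℝ → ℝ) (z : ℂ) : ℂ := ∫ θ, ((bpt θ + z) / (bpt θ - z)) * (g θ : ℂ) ∂arcM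

theorem norm_bpt_sub_ge (z : ℂ) (θ : ℝ) : 1 - ‖z‖ ≤ ‖bpt θ - z‖ := by
  have := norm_sub_norm_le (bpt θ) z
  rwa [norm_bpt] at this

theorem HK_norm_le {z : ℂ} (hz : z ∈ uDisc) (θ : ℝ) :
    ‖(bpt θ + z) / (bpt θ - z)‖ ≤ 2 / (1 - ‖z‖) := by
  have h2 : ‖z‖ < 1 := by simpa [uDisc] using hz
  rw [norm_div]
  have h3 : ‖bpt θ + z‖ ≤ 2 := by
    refine (norm_add_le _ _).trans ?_
    rw [norm_bpt]; linarith
  have := norm_bpt_sub_ge z θ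
  have h4 : 0 < 1 - ‖z‖ := by linarith
  gcongr

theorem HK_integrable_mul {z : ℂ} (hz : z ∈ uDisc) {g : ℝ → ℝ} (hg : Integrable g arcM) :
    Integrable (fun θ => ((bpt θ + z) / (bpt θ - z)) * (g θ : ℂ)) arcM :=
  hg.ofReal.bdd_mul (c := 2 / (1 - ‖z‖)) (continuous_HK hz).aestronglyMeasurable
    (Eventually.of_forall (HK_norm_le hz))

theorem HI_re {z : ℂ} (hz : z ∈ uDisc) {g : ℝ → ℝ} (hg : Integrable g arcM) :
    (HI g z).re = ∫ θ, PK z θ * g θ ∂arcM := by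
  have := integral_re (𝕜 := ℂ) (HK_integrable_mul hz hg)
  simp only [RCLike.re_to_complex] at this
  rw [HI, ← this]
  congr 1
  ext θ
  rw [re_mul_ofReal, PK]

theorem HI_analytic {g : ℝ → ℝ} (hg : Integrable g arcM) : AnalyticOnDisc (HI g) := by
  intro z0 hz0
  have h0 : ‖z0‖ < 1 := by simpa [uDisc] using hz0
  set ρ : ℝ := (1 + ‖z0‖) / 2 with hρ
  have hρ1 : ρ < 1 := by rw [hρ]; linarith
  have hs : ball (0 : ℂ) ρ ∈ nhds z0 := isOpen_ball.mem_nhds (by simp; rw [hρ]; linarith)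
  have hin : ∀ z ∈ ball (0 : ℂ) ρ, z ∈ uDisc := fun z hz => ball_subset_ball hρ1.le hz
  have hpos : 0 < 1 - ρ := by linarith
  have key := hasDerivAt_integral_of_dominated_loc_of_deriv_le (μ := arcM) (𝕜 := ℂ)
    (F := fun z θ => ((bpt θ + z) / (bpt θ - z)) * (g θ : ℂ))
    (F' := fun z θ => (2 * bpt θ / (bpt θ - z) ^ 2) * (g θ : ℂ)) (x₀ := z0)
    (bound := fun θ => 2 / (1 - ρ) ^ 2 * |g θ|) hs ?_ ?_ ?_ ?_ ?_ ?_
  · exact key.2.differentiableAt.differentiableWithinAt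
  · filter_upwards [hs] with z hz
    exact (HK_integrable_mul (hin z hz) hg).aestronglyMeasurable
  · exact HK_integrable_mul hz0 hg
  · refine AEStronglyMeasurable.mul ?_ hg.ofReal.aestronglyMeasurable
    refine Continuous.aestronglyMeasurable ?_
    exact (continuous_const.mul continuous_bpt).div
      ((continuous_bpt.sub continuous_const).pow 2) (fun θ => pow_ne_zero _ (bpt_sub_ne hz0 θ))
  · refine Eventually.of_forall fun θ z hz => ?_
    have hz' : ‖z‖ < ρ := by simpa using hz
    rw [norm_mul, norm_div, norm_pow, norm_mul, norm_bpt, norm_real, Real.norm_eq_abs]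
    have := norm_bpt_sub_ge z θ
    have h5 : 1 - ρ ≤ ‖bpt θ - z‖ := by linarith
    simp only [Complex.norm_ofNat, mul_one]
    gcongr
  · exact hg.abs.const_mul _
  · refine Eventually.of_forall fun θ z hz => ?_
    have hne := bpt_sub_ne (hin z hz) θ
    have h1 : HasDerivAt (fun z => bpt θ + z) 1 z := (hasDerivAt_id z).const_add _
    have h2 : HasDerivAt (fun z => bpt θ - z) (-1) z := (hasDerivAt_id z).const_sub _
    have h3 := (h1.div h2 hne).mul_const (g θ : ℂ)
    convert h3 using 1
    congr 1
    congr 1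
    ring

theorem smirnov_of_bound {h : ℂ → ℂ} (hh : AnalyticOnDisc h) {g : ℝ → ℝ}
    (hg : Integrable g arcM)
    (hb : ∀ z ∈ uDisc, 0 ≤ ∫ θ, PK z θ * g θ ∂arcM ∧
      ‖h z‖ ≤ Real.exp (∫ θ, PK z θ * g θ ∂arcM)) : MemSmirnov h := by
  have hv : AnalyticOnDisc (fun z => Complex.exp (-(HI g z))) := (HI_analytic hg).neg.cexp
  have hn : ∀ z ∈ uDisc, ‖Complex.exp (-(HI g z))‖ = Real.exp (-∫ θ, PK z θ * g θ ∂arcM) := by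
    intro z hz
    rw [Complex.norm_exp, neg_re, HI_re hz hg]
  refine ⟨hh, fun z => h z * Complex.exp (-(HI g z)), fun z => Complex.exp (-(HI g z)),
    ⟨hh.mul hv, 1, fun z hz => ?_⟩, ⟨hv, 1, fun z hz => ?_⟩, ?_, fun z hz => rfl⟩
  · rw [norm_mul, hn z hz, Real.exp_neg, ← div_eq_mul_inv, div_le_one (Real.exp_pos _)]
    exact (hb z hz).2
  · rw [hn z hz, Real.exp_le_one_iff]
    linarith [(hb z hz).1]
  · refine ⟨1, fun θ => Real.exp (-(g θ)), by simp, fun θ => (Real.exp_pos _).le, ?_, ?_⟩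
    · simp only [Real.log_exp]; exact hg.neg
    · intro z hz
      simp only [Real.log_exp, one_mul, ofReal_neg, mul_neg]
      rw [integral_neg]; rfl

theorem MemHinf.mul {u v : ℂ → ℂ} (hu : MemHinf u) (hv : MemHinf v) :
    MemHinf (fun z => u z * v z) := by
  obtain ⟨h1, C, hC⟩ := hu
  obtain ⟨h2, D, hD⟩ := hv
  refine ⟨h1.mul h2, C * D, fun z hz => ?_⟩
  rw [norm_mul]
  exact mul_le_mul (hC z hz) (hD z hz) (norm_nonneg _) ((norm_nonneg _).trans (hC z hz))

theorem MemHinf.add {u v : ℂ → ℂ} (hu : MemHinf u) (hv : MemHinf v) :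
    MemHinf (fun z => u z + v z) := by
  obtain ⟨h1, C, hC⟩ := hu
  obtain ⟨h2, D, hD⟩ := hv
  exact ⟨h1.add h2, C + D, fun z hz => (norm_add_le _ _).trans (add_le_add (hC z hz) (hD z hz))⟩

theorem MemHinf.const (c : ℂ) : MemHinf (fun _ => c) :=
  ⟨differentiableOn_const c, ‖c‖, fun _ _ => le_rfl⟩

theorem IsOuter.mul {u v : ℂ → ℂ} (hu : IsOuter u) (hv : IsOuter v) :
    IsOuter (fun z => u z * v z) := by
  obtain ⟨c1, w1, hc1, -, hi1, h1⟩ := hu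
  obtain ⟨c2, w2, hc2, -, hi2, h2⟩ := hv
  refine ⟨c1 * c2, fun θ => Real.exp (Real.log (w1 θ) + Real.log (w2 θ)), by simp [hc1, hc2],
    fun θ => (Real.exp_pos _).le, ?_, ?_⟩
  · simp only [Real.log_exp]; exact hi1.add hi2
  · intro z hz
    have e : ∫ θ, ((bpt θ + z) / (bpt θ - z)) *
        ((Real.log (Real.exp (Real.log (w1 θ) + Real.log (w2 θ))) : ℝ) : ℂ) ∂arcM =
        ∫ θ, ((bpt θ + z) / (bpt θ - z)) * (Real.log (w1 θ) : ℂ) ∂arcM +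
        ∫ θ, ((bpt θ + z) / (bpt θ - z)) * (Real.log (w2 θ) : ℂ) ∂arcM := by
      rw [← integral_add (HK_integrable_mul hz hi1) (HK_integrable_mul hz hi2)]
      congr 1
      ext θ
      rw [Real.log_exp, ofReal_add]
      ring
    rw [e, Complex.exp_add]
    change u z * v z = _
    rw [h1 z hz, h2 z hz]
    ring

theorem MemSmirnov.add {h k : ℂ → ℂ} (hh : MemSmirnov h) (hk : MemSmirnov k) :
    MemSmirnov (fun z => h z + k z) := by
  obtain ⟨a1, u1, v1, hu1, hv1, ho1, e1⟩ := hh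
  obtain ⟨a2, u2, v2, hu2, hv2, ho2, e2⟩ := hk
  refine ⟨DifferentiableOn.add a1 a2, fun z => u1 z * v2 z + u2 z * v1 z, fun z => v1 z * v2 z,
    (hu1.mul hv2).add (hu2.mul hv1), hv1.mul hv2, ho1.mul ho2, fun z hz => ?_⟩
  have i1 := e1 z hz
  have i2 := e2 z hz
  simp only
  rw [← i1, ← i2]
  ring

theorem MemSmirnov.const_mul {h : ℂ → ℂ} (hh : MemSmirnov h) (c : ℂ) :
    MemSmirnov (fun z => c * h z) := by
  obtain ⟨a1, u1, v1, hu1, hv1, ho1, e1⟩ := hh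
  refine ⟨DifferentiableOn.const_mul a1 c, fun z => c * u1 z, v1, (MemHinf.const c).mul hu1,
    hv1, ho1, fun z hz => ?_⟩
  have i1 := e1 z hz
  simp only
  rw [← i1]
  ring

theorem MemSmirnov.zero : MemSmirnov (fun _ => 0) := by
  refine smirnov_of_bound (g := fun _ => 0) (differentiableOn_const 0) (integrable_zero _ _ _) ?_
  intro z hz
  simp


theorem weak_L2 {ι : Type*} (U : Ultrafilter ι) (G : ι → ℝ → ℝ)
    {K : ℝ} (hK0 : 0 ≤ K)
    (hK : ∀ᶠ i in (U : Filter ι), MemLp (G i) 2 arcM ∧ ∫ θ, G i θ ^ 2 ∂arcM ≤ K) :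
    ∃ g : ℝ → ℝ, MemLp g 2 arcM ∧ ∫ θ, g θ ^ 2 ∂arcM ≤ K ∧
      ∀ k : ℝ → ℝ, MemLp k 2 arcM →
        Tendsto (fun i => ∫ θ, k θ * G i θ ∂arcM) U (nhds (∫ θ, k θ * g θ ∂arcM)) := by
  classical
  have hnorm : ∀ f : ℝ → ℝ, ∀ hf : MemLp f 2 arcM, ‖hf.toLp f‖ ^ 2 = ∫ θ, f θ ^ 2 ∂arcM := by
    intro f hf
    rw [← real_inner_self_eq_norm_sq, L2.inner_def]
    refine integral_congr_ae ?_
    filter_upwards [hf.coeFn_toLp] with θ hθ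
    rw [real_inner_self_eq_norm_sq, hθ, Real.norm_eq_abs, sq_abs]
  let Γ : ι → Lp ℝ 2 arcM := fun i => if h : MemLp (G i) 2 arcM then h.toLp (G i) else 0
  let Φ : ι → Lp ℝ 2 arcM →L[ℝ] ℝ := fun i => InnerProductSpace.toDual ℝ _ (Γ i)
  have hΦ : ∀ᶠ i in (U : Filter ι), ‖Φ i‖ ≤ Real.sqrt K := by
    filter_upwards [hK] with i hi
    have h1 : ‖Φ i‖ = ‖Γ i‖ := LinearIsometryEquiv.norm_map _ _
    rw [h1]
    apply Real.le_sqrt_of_sq_le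
    simp only [Γ, dif_pos hi.1]
    rw [hnorm]
    exact hi.2
  obtain ⟨Φ0, hn, ht⟩ := alaoglu U Φ hΦ
  let γ : Lp ℝ 2 arcM := (InnerProductSpace.toDual ℝ _).symm Φ0
  have hγm : MemLp γ 2 arcM := Lp.memLp γ
  refine ⟨γ, hγm, ?_, ?_⟩
  · rw [← hnorm γ hγm, Lp.toLp_coeFn]
    have h1 : ‖γ‖ = ‖Φ0‖ := LinearIsometryEquiv.norm_map _ _
    rw [h1]
    calc ‖Φ0‖ ^ 2 ≤ Real.sqrt K ^ 2 := by gcongr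
      _ = K := Real.sq_sqrt hK0
  · intro k hk
    have h1 := ht (hk.toLp k)
    have e1 : Φ0 (hk.toLp k) = ∫ θ, k θ * γ θ ∂arcM := by
      have : Φ0 (hk.toLp k) = inner ℝ γ (hk.toLp k) := by
        simp [γ]
      rw [this, L2.inner_def]
      refine integral_congr_ae ?_
      filter_upwards [hk.coeFn_toLp] with θ hθ
      simp [hθ]
    rw [e1] at h1
    refine h1.congr' ?_
    filter_upwards [hK] with i hi
    change inner ℝ (Γ i) (hk.toLp k) = _
    simp only [Γ, dif_pos hi.1]
    rw [L2.inner_def]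
    refine integral_congr_ae ?_
    filter_upwards [hk.coeFn_toLp, hi.1.coeFn_toLp] with θ hθ hθ2
    simp [hθ, hθ2]

/-- Positive logarithm. -/
def LP (x : ℝ) : ℝ := Real.log (max 1 x)

theorem LP_nonneg (x : ℝ) : 0 ≤ LP x := Real.log_nonneg (le_max_left _ _)

theorem le_exp_LP (x : ℝ) : x ≤ Real.exp (LP x) := by
  rw [LP, Real.exp_log (lt_of_lt_of_le one_pos (le_max_left _ _))]
  exact le_max_right _ _

theorem continuous_LP : Continuous LP := by
  unfold LP
  exact (continuous_const.max continuous_id).log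
    (fun x => (lt_of_lt_of_le one_pos (le_max_left 1 x)).ne')

theorem LP_sq_le {p : ℝ} (hp : 0 < p) {x : ℝ} (hx : 0 ≤ x) : LP x ^ 2 ≤ (4 / p ^ 2) * x ^ p := by
  rcases le_total x 1 with h | h
  · have : LP x = 0 := by simp [LP, max_eq_left h]
    rw [this]
    have := Real.rpow_nonneg hx p
    simp only [ne_eq, OfNat.ofNat_ne_zero, not_false_eq_true, zero_pow]
    positivity
  · have h1 : LP x ≤ x ^ (p / 2) / (p / 2) := by
      rw [LP, max_eq_right h]
      exact Real.log_le_rpow_div hx (half_pos hp)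
    calc LP x ^ 2 ≤ (x ^ (p / 2) / (p / 2)) ^ 2 := by
          have := LP_nonneg x
          gcongr
      _ = (4 / p ^ 2) * (x ^ (p / 2) * x ^ (p / 2)) := by ring
      _ = _ := by
        rw [← Real.rpow_add (by linarith)]
        congr 2
        ring

theorem cont_circle {E : Type*} [TopologicalSpace E] {F : ℂ → E} (hF : ContinuousOn F uDisc)
    {r : ℝ} (h0 : 0 < r) (h1 : r < 1) : Continuous (fun θ : ℝ => F (r * bpt θ)) :=
  hF.comp_continuous (continuous_const.mul continuous_bpt) (fun θ => mul_bpt_mem h0.le h1 θ)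

theorem arcM_memLp_of_cont {f : ℝ → ℝ} (hf : Continuous f) :
    MemLp f 2 arcM := by
  rw [memLp_two_iff_integrable_sq hf.aestronglyMeasurable]
  exact arcM_integrable_of_cont (hf.pow 2)

theorem trunc_exists {k : ℝ → ℝ} (hk : Integrable k arcM) {ε : ℝ} (hε : 0 < ε) :
    ∃ (K : ℝ) (k1 : ℝ → ℝ), 0 ≤ K ∧ Integrable k1 arcM ∧ (∀ θ, |k1 θ| ≤ K) ∧
      ∫ θ, |k θ - k1 θ| ∂arcM ≤ ε := by
  let c : ℕ → ℝ → ℝ := fun n θ => max (-(n : ℝ)) (min n (k θ))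
  have hcm : ∀ n, AEStronglyMeasurable (c n) arcM := fun n => by
    have : Continuous (fun x : ℝ => max (-(n : ℝ)) (min n x)) := by fun_prop
    exact this.comp_aestronglyMeasurable hk.aestronglyMeasurable
  have hcb : ∀ n θ, |c n θ| ≤ n := by
    intro n θ
    have hn : (0 : ℝ) ≤ n := Nat.cast_nonneg n
    rw [abs_le]
    exact ⟨le_max_left _ _, max_le (by linarith) (min_le_left _ _)⟩
  have hdb : ∀ n θ, |k θ - c n θ| ≤ |k θ| := by
    intro n θ
    have hn : (0 : ℝ) ≤ n := Nat.cast_nonneg n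
    simp only [c]
    rcases le_total (n : ℝ) (k θ) with h | h
    · rw [min_eq_left h, max_eq_right (by linarith), abs_of_nonneg (by linarith),
        abs_of_nonneg (by linarith)]
      linarith
    · rw [min_eq_right h]
      rcases le_total (-(n : ℝ)) (k θ) with h2 | h2
      · rw [max_eq_right h2]; simp
      · rw [max_eq_left h2, abs_of_nonpos (by linarith), abs_of_nonpos (by linarith)]
        linarith
  have hlim : Tendsto (fun n : ℕ => ∫ θ, |k θ - c n θ| ∂arcM) atTop (nhds (∫ θ, 0 ∂arcM)) := by
    refine tendsto_integral_of_dominated_convergence (fun θ => |k θ|)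
      (fun n => (hk.aestronglyMeasurable.sub (hcm n)).norm) hk.abs
      (fun n => Eventually.of_forall fun θ => ?_) (Eventually.of_forall fun θ => ?_)
    · rw [Real.norm_eq_abs, abs_abs]; exact hdb n θ
    · refine tendsto_const_nhds.congr' ?_
      obtain ⟨N, hN⟩ := exists_nat_ge |k θ|
      filter_upwards [eventually_ge_atTop N] with n hn
      have h1 : |k θ| ≤ n := hN.trans (by exact_mod_cast hn)
      rw [abs_le] at h1
      simp only [c]
      rw [min_eq_right h1.2, max_eq_right h1.1]; simp
  rw [integral_zero] at hlim
  obtain ⟨n, hn⟩ := (hlim.eventually (eventually_le_nhds hε)).exists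
  refine ⟨n, c n, Nat.cast_nonneg n, ?_, hcb n, hn⟩
  exact Integrable.of_bound (hcm n) n (Eventually.of_forall fun θ => hcb n θ)

theorem poisson_fubini {k : ℝ → ℝ} (hk : Integrable k arcM) {r : ℝ} (h0 : 0 < r) (h1 : r < 1) :
    ∫ θ, (∫ φ, PK (r * bpt θ) φ * k φ ∂arcM) ∂arcM = ∫ φ, k φ ∂arcM := by
  have hcont : Continuous (fun q : ℝ × ℝ => PK (r * bpt q.1) q.2) := by
    unfold PK
    refine Complex.continuous_re.comp ?_
    refine Continuous.div ?_ ?_ (fun q => bpt_sub_ne (mul_bpt_mem h0.le h1 _) _)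
    · exact (continuous_bpt.comp continuous_snd).add
        (continuous_const.mul (continuous_bpt.comp continuous_fst))
    · exact (continuous_bpt.comp continuous_snd).sub
        (continuous_const.mul (continuous_bpt.comp continuous_fst))
  have hIntg : Integrable (Function.uncurry fun θ φ => PK (r * bpt θ) φ * k φ) (arcM.prod arcM) := by
    refine (hk.comp_snd arcM).bdd_mul (c := (1 + r) / (1 - r)) hcont.aestronglyMeasurable ?_
    refine Eventually.of_forall fun q => ?_
    have hm := mul_bpt_mem h0.le h1 q.1
    rw [Real.norm_eq_abs, abs_of_nonneg (PK_nonneg hm _)]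
    have := PK_le hm q.2
    simpa [norm_bpt, abs_of_pos h0] using this
  rw [integral_integral_swap hIntg]
  congr 1
  ext φ
  rw [integral_mul_const]
  have : ∫ θ, PK (r * bpt θ) φ ∂arcM = 1 := by
    rw [← integral_PK (mul_bpt_mem h0.le h1 φ)]
    congr 1
    ext θ
    rw [PK_symm h0.le]
  rw [this, one_mul]


theorem ptwise_bound {nh nt C K b b1 b2 β : ℝ} (hh : 0 ≤ nh)
    (hu : nh * Real.exp b ≤ C) (hb : b = b1 + b2) (hb1 : -K ≤ b1) (hb2 : 0 ≤ b2 + β)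
    (hβ : 0 ≤ β) :
    nh ≤ Real.exp (LP (nt * nh) + β + Real.exp K * C * |1 - nt|) := by
  set m := Real.exp (LP (nt * nh) + b + β) with hm
  set x := Real.exp K * C * |1 - nt| with hx
  have hC : 0 ≤ C := le_trans (by positivity) hu
  have hx0 : 0 ≤ x := by positivity
  have hL := LP_nonneg (nt * nh)
  have h1 : nh * Real.exp b ≤ (nt * nh) * Real.exp b + C * |1 - nt| := by
    have h2 : nh * Real.exp b * (1 - nt) ≤ C * |1 - nt| :=
      (mul_le_mul_of_nonneg_left (le_abs_self _) (by positivity)).trans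
        (mul_le_mul_of_nonneg_right hu (abs_nonneg _))
    nlinarith
  have h3 : (nt * nh) * Real.exp b ≤ m := by
    rw [hm, Real.exp_add, Real.exp_add]
    have := le_exp_LP (nt * nh)
    have h5 : 1 ≤ Real.exp β := Real.one_le_exp hβ
    calc (nt * nh) * Real.exp b ≤ Real.exp (LP (nt * nh)) * Real.exp b := by gcongr
      _ ≤ _ := le_mul_of_one_le_right (by positivity) h5
  have h4 : C * |1 - nt| ≤ m * x := by
    have h5 : Real.exp (-K) ≤ m := by
      rw [hm]; apply Real.exp_le_exp.2; linarith
    calc C * |1 - nt| = Real.exp (-K) * x := by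
          rw [hx, ← mul_assoc, ← mul_assoc, ← Real.exp_add]; simp
      _ ≤ m * x := by gcongr
  have h6 : nh * Real.exp b ≤ m * Real.exp x := by
    have := Real.add_one_le_exp x
    have hm0 : 0 ≤ m := (Real.exp_pos _).le
    nlinarith
  have h7 : m * Real.exp x = Real.exp (LP (nt * nh) + β + x) * Real.exp b := by
    rw [hm, ← Real.exp_add, ← Real.exp_add]; congr 1; ring
  rw [h7] at h6
  exact le_of_mul_le_mul_right h6 (Real.exp_pos b)

theorem smirnov_step {ϑ h u v : ℂ → ℂ} (hϑ : AnalyticOnDisc ϑ) (hh : AnalyticOnDisc h)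
    {C : ℝ} (hC : ∀ z ∈ uDisc, ‖u z‖ ≤ C) (hv : IsOuter v)
    (huv : ∀ z ∈ uDisc, h z * v z = u z) {ε : ℝ} (hε : 0 < ε) :
    ∃ A : ℝ, 0 ≤ A ∧ ∀ r : ℝ, 0 < r → r < 1 → ∀ z ∈ uDisc,
      ‖h (r * z)‖ ≤ Real.exp (∫ θ, PK z θ * LP ‖ϑ (r * bpt θ) * h (r * bpt θ)‖ ∂arcM +
        (1 + ‖z‖) / (1 - ‖z‖) * (ε + A * ∫ θ, |1 - ‖ϑ (r * bpt θ)‖| ∂arcM)) := by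
  obtain ⟨c, w, hc, -, hk, hvw⟩ := hv
  obtain ⟨K, k1, hK, hk1, hk1b, hk2⟩ := trunc_exists hk hε
  have hC0 : 0 ≤ C := (norm_nonneg _).trans (hC 0 (by simp [uDisc]))
  set k : ℝ → ℝ := fun θ => Real.log (w θ) with hkdef
  have hk2i : Integrable (fun θ => k θ - k1 θ) arcM := hk.sub hk1
  have hβi : Integrable (fun θ => |k θ - k1 θ|) arcM := hk2i.abs
  refine ⟨Real.exp K * C, by positivity, fun r h0 h1 z hz => ?_⟩
  set β : ℂ → ℝ := fun z => ∫ θ, PK z θ * |k θ - k1 θ| ∂arcM with hβ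
  have hβc : ContinuousOn β uDisc := by
    have h2 : ContinuousOn (fun z => (HI (fun θ => |k θ - k1 θ|) z).re) uDisc :=
      Complex.continuous_re.comp_continuousOn (HI_analytic hβi).continuousOn
    exact h2.congr fun z hz => (HI_re hz hβi).symm
  have hβ0 : ∀ z ∈ uDisc, 0 ≤ β z := fun z hz =>
    integral_nonneg fun θ => mul_nonneg (PK_nonneg hz θ) (abs_nonneg _)
  have hnv : ∀ z ∈ uDisc, ‖v z‖ = Real.exp (∫ θ, PK z θ * k θ ∂arcM) := by
    intro z hz
    rw [hvw z hz, norm_mul, hc, one_mul, Complex.norm_exp]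
    congr 1
    exact HI_re hz hk
  have hpt : ∀ z ∈ uDisc, ‖h z‖ ≤
      Real.exp (LP ‖ϑ z * h z‖ + β z + Real.exp K * C * |1 - ‖ϑ z‖|) := by
    intro z hz
    rw [norm_mul]
    refine ptwise_bound (b := ∫ θ, PK z θ * k θ ∂arcM) (b1 := ∫ θ, PK z θ * k1 θ ∂arcM)
      (b2 := ∫ θ, PK z θ * (k θ - k1 θ) ∂arcM) (norm_nonneg _) ?_ ?_ ?_ ?_
      (hβ0 z hz)
    · rw [← hnv z hz, ← norm_mul, huv z hz]; exact hC z hz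
    · rw [← integral_add (PK_integrable_mul hz hk1) (PK_integrable_mul hz hk2i)]
      congr 1; ext θ; ring
    · have : ∫ θ, PK z θ * (-K) ∂arcM = -K := by rw [integral_mul_const, integral_PK hz, one_mul]
      rw [← this]
      refine integral_mono (PK_integrable_mul hz (integrable_const _)) (PK_integrable_mul hz hk1) ?_
      intro θ
      exact mul_le_mul_of_nonneg_left (abs_le.1 (hk1b θ)).1 (PK_nonneg hz θ)
    · rw [hβ, ← integral_add (PK_integrable_mul hz hk2i) (PK_integrable_mul hz hβi)]
      refine integral_nonneg fun θ => ?_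
      have := neg_abs_le (k θ - k1 θ)
      have h3 := PK_nonneg hz θ
      simp only [Pi.zero_apply]
      nlinarith
  have cG : Continuous (fun θ => LP ‖ϑ (r * bpt θ) * h (r * bpt θ)‖) :=
    continuous_LP.comp ((cont_circle hϑ.continuousOn h0 h1).mul
      (cont_circle hh.continuousOn h0 h1)).norm
  have cβ : Continuous (fun θ => β (r * bpt θ)) := cont_circle hβc h0 h1
  have cD : Continuous (fun θ => |1 - ‖ϑ (r * bpt θ)‖|) :=
    (continuous_const.sub (cont_circle hϑ.continuousOn h0 h1).norm).abs
  have cE : Continuous (fun θ => Real.exp K * C * |1 - ‖ϑ (r * bpt θ)‖|) :=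
    continuous_const.mul cD
  have hs := subharm hh h0 h1 (ψ := fun θ => LP ‖ϑ (r * bpt θ) * h (r * bpt θ)‖ + β (r * bpt θ) +
    Real.exp K * C * |1 - ‖ϑ (r * bpt θ)‖|) ((cG.add cβ).add (continuous_const.mul cD))
    (fun θ => by simp only [bpt_periodic]) (fun θ => hpt _ (mul_bpt_mem h0.le h1 θ)) hz
  refine hs.trans (Real.exp_le_exp.2 ?_)
  have iG := PK_integrable_mul hz (arcM_integrable_of_cont cG)
  have iβ := PK_integrable_mul hz (arcM_integrable_of_cont cβ)
  have iD := PK_integrable_mul hz (arcM_integrable_of_cont cE)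
  have hM : ∀ g : ℝ → ℝ, Continuous g → (∀ θ, 0 ≤ g θ) →
      ∫ θ, PK z θ * g θ ∂arcM ≤ (1 + ‖z‖) / (1 - ‖z‖) * ∫ θ, g θ ∂arcM := by
    intro g hg hg0
    rw [← integral_const_mul]
    refine integral_mono (PK_integrable_mul hz (arcM_integrable_of_cont hg))
      ((arcM_integrable_of_cont hg).const_mul _) fun θ => ?_
    exact mul_le_mul_of_nonneg_right (PK_le hz θ) (hg0 θ)
  have hz1 : ‖z‖ < 1 := by simpa [uDisc] using hz
  have hMz : 0 ≤ (1 + ‖z‖) / (1 - ‖z‖) := div_nonneg (by positivity) (by linarith)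
  have e1 := hM _ cβ (fun θ => hβ0 _ (mul_bpt_mem h0.le h1 θ))
  have e2 := hM _ cE (fun θ => by positivity)
  have e3 : ∫ θ, β (r * bpt θ) ∂arcM ≤ ε := by
    rw [hβ, poisson_fubini hβi h0 h1]; exact hk2
  rw [integral_const_mul] at e2
  have e4 : ∫ θ, PK z θ * (LP ‖ϑ (r * bpt θ) * h (r * bpt θ)‖ + β (r * bpt θ) +
      Real.exp K * C * |1 - ‖ϑ (r * bpt θ)‖|) ∂arcM =
      ∫ θ, PK z θ * LP ‖ϑ (r * bpt θ) * h (r * bpt θ)‖ ∂arcM +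
      ∫ θ, PK z θ * β (r * bpt θ) ∂arcM +
      ∫ θ, PK z θ * (Real.exp K * C * |1 - ‖ϑ (r * bpt θ)‖|) ∂arcM := by
    have iGβ : Integrable (fun θ => PK z θ * LP ‖ϑ (r * bpt θ) * h (r * bpt θ)‖ +
      PK z θ * β (r * bpt θ)) arcM := iG.add iβ
    rw [← integral_add iG iβ, ← integral_add iGβ iD]
    congr 1; ext θ; ring
  rw [e4]
  have e5 := mul_le_mul_of_nonneg_left e3 hMz
  rw [mul_add]
  linarith

theorem inner_defect {ϑ : ℂ → ℂ} (hϑ : IsInner ϑ) :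
    Tendsto (fun r : ℝ => ∫ θ, |1 - ‖ϑ (r * bpt θ)‖| ∂arcM) (nhdsWithin 1 (Set.Iio 1))
      (nhds 0) := by
  obtain ⟨⟨ha, C, hC⟩, Θ, hΘ, hΘ1⟩ := hϑ
  have hev : ∀ᶠ r : ℝ in nhdsWithin 1 (Set.Iio 1), 0 < r ∧ r < 1 :=
    Ioo_mem_nhdsLT (by norm_num)
  have := tendsto_integral_filter_of_dominated_convergence (μ := arcM)
    (l := nhdsWithin (1 : ℝ) (Set.Iio 1)) (F := fun (r : ℝ) θ => |1 - ‖ϑ (r * bpt θ)‖|)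
    (f := fun _ => 0) (fun _ => 1 + C) ?_ ?_ (integrable_const _) ?_
  · simpa using this
  · filter_upwards [hev] with r hr
    exact (continuous_const.sub (cont_circle ha.continuousOn hr.1 hr.2).norm).abs.aestronglyMeasurable
  · filter_upwards [hev] with r hr
    refine Eventually.of_forall fun θ => ?_
    have h1 := hC _ (mul_bpt_mem hr.1.le hr.2 θ)
    have h2 := norm_nonneg (ϑ (r * bpt θ))
    rw [Real.norm_eq_abs, abs_abs, abs_le]
    constructor <;> linarith
  · filter_upwards [hΘ, hΘ1] with θ h1 h2
    have h3 := (tendsto_const_nhds (x := (1 : ℝ))).sub h1.norm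
    rw [h2, sub_self] at h3
    simpa using h3.abs

theorem smirnov_majorant {p B : ℝ} (hp : 0 < p) {ϑ h : ℂ → ℂ} (hϑ : IsInner ϑ)
    (hh : MemSmirnov h) (hB : ∀ r : ℝ, 0 < r → r < 1 → hMean p (fun z => ϑ z * h z) r ≤ B) :
    ∃ g : ℝ → ℝ, MemLp g 2 arcM ∧ ∫ θ, g θ ^ 2 ∂arcM ≤ 4 / p ^ 2 * B ∧
      ∀ z ∈ uDisc, 0 ≤ ∫ θ, PK z θ * g θ ∂arcM ∧
        ‖h z‖ ≤ Real.exp (∫ θ, PK z θ * g θ ∂arcM) := by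
  obtain ⟨hha, u, v, ⟨-, C, hC⟩, -, hv, huv⟩ := hh
  have hϑa := hϑ.1.1
  have hB0 : 0 ≤ B := le_trans (integral_nonneg fun θ => Real.rpow_nonneg (norm_nonneg _) _)
    (hB (1 / 2) (by norm_num) (by norm_num))
  have hev : ∀ᶠ r : ℝ in nhdsWithin 1 (Set.Iio 1), 0 < r ∧ r < 1 :=
    Ioo_mem_nhdsLT (by norm_num)
  let U : Ultrafilter ℝ := Ultrafilter.of (nhdsWithin (1 : ℝ) (Set.Iio 1))
  have hU : (U : Filter ℝ) ≤ nhdsWithin (1 : ℝ) (Set.Iio 1) := Ultrafilter.of_le _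
  let G : ℝ → ℝ → ℝ := fun r θ => LP ‖ϑ (r * bpt θ) * h (r * bpt θ)‖
  have cF : ∀ r : ℝ, 0 < r → r < 1 → Continuous (fun θ => ‖ϑ (r * bpt θ) * h (r * bpt θ)‖) :=
    fun r h0 h1 => ((cont_circle hϑa.continuousOn h0 h1).mul
      (cont_circle hha.continuousOn h0 h1)).norm
  have cG : ∀ r : ℝ, 0 < r → r < 1 → Continuous (G r) :=
    fun r h0 h1 => continuous_LP.comp (cF r h0 h1)
  obtain ⟨g, hg, hgK, hgt⟩ := weak_L2 U G (K := 4 / p ^ 2 * B) (by positivity) (by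
    filter_upwards [hU hev] with r hr
    refine ⟨arcM_memLp_of_cont (cG r hr.1 hr.2), ?_⟩
    refine le_trans ?_ (mul_le_mul_of_nonneg_left (hB r hr.1 hr.2) (by positivity))
    rw [hMean, ← integral_const_mul]
    refine integral_mono (arcM_integrable_of_cont ((cG r hr.1 hr.2).pow 2))
      ((arcM_integrable_of_cont ((cF r hr.1 hr.2).rpow_const fun θ => Or.inr hp.le)).const_mul _) ?_
    intro θ
    exact LP_sq_le hp (norm_nonneg _))
  refine ⟨g, hg, hgK, fun z hz => ?_⟩
  have hlim := hgt (PK z) (arcM_memLp_of_cont (continuous_PK hz))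
  refine ⟨ge_of_tendsto hlim (Eventually.of_forall fun r => integral_nonneg fun θ =>
    mul_nonneg (PK_nonneg hz θ) (LP_nonneg _)), ?_⟩
  have hz1 : ‖z‖ < 1 := by simpa [uDisc] using hz
  have hcont : Tendsto (fun r : ℝ => ‖h (r * z)‖) U (nhds ‖h z‖) := by
    have h1 : ContinuousAt h z := hha.continuousOn.continuousAt (isOpen_ball.mem_nhds hz)
    have h2 : Tendsto (fun r : ℝ => (r : ℂ) * z) (nhds 1) (nhds z) := by
      have : Continuous fun r : ℝ => (r : ℂ) * z := by fun_prop
      simpa using this.tendsto 1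
    exact ((h1.tendsto.comp h2).norm).mono_left (hU.trans nhdsWithin_le_nhds)
  have main : ∀ ε > 0, ‖h z‖ ≤
      Real.exp (∫ θ, PK z θ * g θ ∂arcM + (1 + ‖z‖) / (1 - ‖z‖) * ε) := by
    intro ε hε
    obtain ⟨A, hA, hstep⟩ := smirnov_step hϑa hha hC hv huv hε
    have hd := (inner_defect hϑ).mono_left hU
    have hr := (Real.continuous_exp.tendsto _).comp (hlim.add
      (((hd.const_mul A).const_add ε).const_mul ((1 + ‖z‖) / (1 - ‖z‖))))
    rw [mul_zero, add_zero] at hr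
    refine le_of_tendsto_of_tendsto hcont hr ?_
    filter_upwards [hU hev] with r hr'
    exact hstep r hr'.1 hr'.2 z hz
  have hfin : Tendsto (fun ε : ℝ => Real.exp (∫ θ, PK z θ * g θ ∂arcM +
      (1 + ‖z‖) / (1 - ‖z‖) * ε)) (nhdsWithin 0 (Set.Ioi 0))
      (nhds (Real.exp (∫ θ, PK z θ * g θ ∂arcM))) := by
    have : Continuous fun ε : ℝ => Real.exp (∫ θ, PK z θ * g θ ∂arcM +
      (1 + ‖z‖) / (1 - ‖z‖) * ε) := by fun_prop
    have h2 := this.tendsto 0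
    simp only [mul_zero, add_zero] at h2
    exact h2.mono_left nhdsWithin_le_nhds
  exact ge_of_tendsto hfin (by filter_upwards [self_mem_nhdsWithin] with ε hε using main ε hε)


theorem uDisc_nhds {z : ℂ} (hz : z ∈ uDisc) : uDisc ∈ nhds z := isOpen_ball.mem_nhds hz

theorem analyticOnNhd_disc {f : ℂ → ℂ} (hf : AnalyticOnDisc f) : AnalyticOnNhd ℂ f uDisc :=
  hf.analyticOnNhd isOpen_ball

theorem disc_identity {f : ℂ → ℂ} (hf : AnalyticOnDisc f) {c : ℂ} (hc : c ∈ uDisc)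
    (h : ∀ᶠ z in nhds c, f z = 0) : ∀ z ∈ uDisc, f z = 0 := by
  have hpre : IsPreconnected uDisc := (convex_ball (0 : ℂ) 1).isPreconnected
  exact fun z hz => (analyticOnNhd_disc hf).eqOn_zero_of_preconnected_of_eventuallyEq_zero
    hpre hc h hz

theorem inner_ne_zero {ϑ : ℂ → ℂ} (hϑ : IsInner ϑ) {c : ℂ} (hc : c ∈ uDisc) :
    ∀ᶠ z in nhdsWithin c {c}ᶜ, ϑ z ≠ 0 := by
  rcases (analyticOnNhd_disc hϑ.1.1 c hc).eventually_eq_zero_or_eventually_ne_zero with h | h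
  · exfalso
    have h0 := disc_identity hϑ.1.1 hc h
    have ht := inner_defect hϑ
    have h1 : Tendsto (fun r : ℝ => ∫ θ, |1 - ‖ϑ (r * bpt θ)‖| ∂arcM) (nhdsWithin 1 (Set.Iio 1))
        (nhds 1) := by
      refine tendsto_const_nhds.congr' ?_
      filter_upwards [Ioo_mem_nhdsLT (show (0 : ℝ) < 1 by norm_num)] with r hr
      have : ∀ θ, |1 - ‖ϑ (r * bpt θ)‖| = 1 := fun θ => by
        rw [h0 _ (mul_bpt_mem hr.1.le hr.2 θ)]; simp
      simp [this]
    exact one_ne_zero (tendsto_nhds_unique h1 ht)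
  · exact h

theorem quotient_ext {f ϑ : ℂ → ℂ} {P : ℂ → ℝ} (hf : AnalyticOnDisc f) (hϑ : AnalyticOnDisc ϑ)
    (hne : ∀ c ∈ uDisc, ∀ᶠ z in nhdsWithin c {c}ᶜ, ϑ z ≠ 0) (hP : ContinuousOn P uDisc)
    (hz : ∀ z ∈ uDisc, ϑ z = 0 → f z = 0)
    (hb : ∀ z ∈ uDisc, ϑ z ≠ 0 → ‖f z / ϑ z‖ ≤ P z) :
    ∃ h : ℂ → ℂ, AnalyticOnDisc h ∧ (∀ z ∈ uDisc, f z = ϑ z * h z) ∧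
      ∀ z ∈ uDisc, ‖h z‖ ≤ P z := by
  let q : ℂ → ℂ := fun z => f z / ϑ z
  have hqd : ∀ z ∈ uDisc, ϑ z ≠ 0 → DifferentiableAt ℂ q z := fun z hz h =>
    (hf.differentiableAt (uDisc_nhds hz)).div (hϑ.differentiableAt (uDisc_nhds hz)) h
  have hdisc : ∀ c ∈ uDisc, ∀ᶠ z in nhdsWithin c {c}ᶜ, z ∈ uDisc := fun c hc =>
    nhdsWithin_le_nhds (uDisc_nhds hc)
  let h : ℂ → ℂ := fun z => limUnder (nhdsWithin z {z}ᶜ) q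
  have hPc : ∀ c ∈ uDisc, ContinuousAt P c := fun c hc => hP.continuousAt (uDisc_nhds hc)
  have hlim : ∀ c ∈ uDisc, Tendsto q (nhdsWithin c {c}ᶜ) (nhds (h c)) := by
    intro c hc
    refine tendsto_limUnder_of_differentiable_on_punctured_nhds_of_bounded_under ?_ ?_
    · filter_upwards [hne c hc, hdisc c hc] with z h1 h2 using hqd z h2 h1
    · refine ⟨P c + 1 + ‖q c‖, ?_⟩
      rw [eventually_map]
      have h3 : ∀ᶠ z in nhdsWithin c {c}ᶜ, P z < P c + 1 :=
        nhdsWithin_le_nhds ((hPc c hc).eventually_lt continuousAt_const (by linarith))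
      filter_upwards [hne c hc, hdisc c hc, h3] with z h1 h2 h4
      refine (norm_sub_le _ _).trans ?_
      have := hb z h2 h1
      simp only [q] at *
      linarith
  have hq : ∀ c ∈ uDisc, ϑ c ≠ 0 → h c = q c := by
    intro c hc h1
    exact tendsto_nhds_unique (hlim c hc)
      ((hqd c hc h1).continuousAt.tendsto.mono_left nhdsWithin_le_nhds)
  refine ⟨h, ?_, ?_, ?_⟩
  · intro c hc
    refine DifferentiableAt.differentiableWithinAt ?_
    refine (analyticAt_of_differentiable_on_punctured_nhds_of_continuousAt ?_ ?_).differentiableAt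
    · filter_upwards [hne c hc, hdisc c hc] with z h1 h2
      refine (hqd z h2 h1).congr_of_eventuallyEq ?_
      have h4 : ∀ᶠ w in nhds z, ϑ w ≠ 0 :=
        (hϑ.continuousOn.continuousAt (uDisc_nhds h2)).eventually_ne h1
      filter_upwards [uDisc_nhds h2, h4] with w h5 h6 using hq w h5 h6
    · rw [continuousAt_iff_punctured_nhds]
      refine (hlim c hc).congr' ?_
      filter_upwards [hne c hc, hdisc c hc] with z h1 h2 using (hq z h2 h1).symm
  · intro z hz'
    by_cases h1 : ϑ z = 0
    · rw [h1, zero_mul]; exact hz z hz' h1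
    · rw [hq z hz' h1]; simp only [q]; field_simp
  · intro c hc
    refine le_of_tendsto_of_tendsto (hlim c hc).norm
      ((hPc c hc).tendsto.mono_left nhdsWithin_le_nhds) ?_
    filter_upwards [hne c hc, hdisc c hc] with z h1 h2 using hb z h2 h1

section CD
variable {X : Type*} [NormedAddCommGroup X] [NormedSpace ℂ X]

theorem cd_bdd_aux (e : ℕ → X) (Λ : X →L[ℂ] ℂ) (ha : AnalyticOnDisc (cauchyDualFn e Λ))
    (h0 : Λ (e 0) ≠ 0) {r : ℝ} (hr0 : 0 < r) (hr1 : r < 1) :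
    ∃ M : ℝ, ∀ n, ‖Λ (e n)‖ * r ^ n ≤ M := by
  have hex : ∃ z : ℂ, r < ‖z‖ ∧ ‖z‖ < 1 ∧ cauchyDualFn e Λ z ≠ 0 := by
    by_contra hcon
    push Not at hcon
    set c : ℂ := (((r + 1) / 2 : ℝ) : ℂ) with hc
    have hcn : ‖c‖ = (r + 1) / 2 := by rw [hc, norm_real, Real.norm_of_nonneg (by positivity)]
    have hcd : c ∈ uDisc := by simp only [uDisc, mem_ball_zero_iff, hcn]; linarith
    have hev : ∀ᶠ z in nhds c, cauchyDualFn e Λ z = 0 := by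
      have h1 : ∀ᶠ z in nhds c, r < ‖z‖ :=
        continuous_norm.continuousAt.eventually_const_lt (by simp only [hcn]; linarith)
      filter_upwards [h1, uDisc_nhds hcd] with z h2 h3
      exact hcon z h2 (by simpa [uDisc] using h3)
    have h4 := disc_identity ha hcd hev 0 (by simp [uDisc])
    rw [cauchyDualFn, tsum_eq_single 0 (fun n hn => by simp [hn])] at h4
    simp at h4
    exact h0 h4
  obtain ⟨z, hz1, hz2, hz3⟩ := hex
  have hs : Summable fun n : ℕ => (starRingEnd ℂ) (Λ (e n)) * z ^ n := by
    by_contra hcon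
    exact hz3 (tsum_eq_zero_of_not_summable hcon)
  obtain ⟨M, hM⟩ := hs.tendsto_atTop_zero.norm.bddAbove_range
  refine ⟨M, fun n => le_trans ?_ (hM ⟨n, rfl⟩)⟩
  simp only [norm_mul, norm_pow, RCLike.norm_conj]
  gcongr

theorem cd_bdd [CompleteSpace X] (e : ℕ → X) (he0 : e 0 ≠ 0)
    (ha : ∀ Λ : X →L[ℂ] ℂ, AnalyticOnDisc (cauchyDualFn e Λ))
    {r : ℝ} (hr0 : 0 < r) (hr1 : r < 1) : ∃ M : ℝ, ∀ n, r ^ n * ‖e n‖ ≤ M := by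
  have hpt : ∀ Λ : X →L[ℂ] ℂ, ∃ M : ℝ, ∀ n, ‖Λ (e n)‖ * r ^ n ≤ M := by
    intro Λ
    by_cases h : Λ (e 0) = 0
    · obtain ⟨Λ0, -, h0⟩ := exists_dual_vector ℂ (e 0) (norm_ne_zero_iff.2 he0)
      have h0' : Λ0 (e 0) ≠ 0 := by rw [h0]; simpa using he0
      obtain ⟨M1, h1⟩ := cd_bdd_aux e Λ0 (ha _) h0' hr0 hr1
      obtain ⟨M2, h2⟩ := cd_bdd_aux e (Λ + Λ0) (ha _) (by simpa [h] using h0') hr0 hr1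
      refine ⟨M2 + M1, fun n => ?_⟩
      have h3 : ‖Λ (e n)‖ ≤ ‖(Λ + Λ0) (e n)‖ + ‖Λ0 (e n)‖ := by
        have := norm_sub_le ((Λ + Λ0) (e n)) (Λ0 (e n))
        simpa using this
      have h4 : 0 ≤ r ^ n := by positivity
      have := h1 n
      have := h2 n
      nlinarith
    · exact cd_bdd_aux e Λ (ha _) h hr0 hr1
  obtain ⟨M, hM⟩ := banach_steinhaus (𝕜 := ℂ) (𝕜₂ := ℂ) (E := StrongDual ℂ X)
    (g := fun n : ℕ => NormedSpace.inclusionInDoubleDualLi (E := X) ℂ (((r : ℂ) ^ n) • e n)) (by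
      intro Λ
      obtain ⟨M, hM⟩ := hpt Λ
      refine ⟨M, fun n => ?_⟩
      refine le_trans (le_of_eq ?_) (hM n)
      change ‖Λ (((r : ℂ) ^ n) • e n)‖ = _
      rw [map_smul, norm_smul, norm_pow, norm_real, Real.norm_of_nonneg hr0.le, mul_comm])
  refine ⟨M, fun n => ?_⟩
  have h1 := hM n
  rw [LinearIsometry.norm_map, norm_smul, norm_pow, norm_real, Real.norm_of_nonneg hr0.le] at h1
  exact h1

theorem cd_eval [CompleteSpace X] (e : ℕ → X) (he0 : e 0 ≠ 0)
    (ha : ∀ Λ : X →L[ℂ] ℂ, AnalyticOnDisc (cauchyDualFn e Λ)) {z : ℂ} (hz : z ∈ uDisc) :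
    ∃ x : X, ∀ Λ : X →L[ℂ] ℂ, cauchyDualFn e Λ z = (starRingEnd ℂ) (Λ x) := by
  have hz1 : ‖z‖ < 1 := by simpa [uDisc] using hz
  have hz0 := norm_nonneg z
  set r := (1 + ‖z‖) / 2 with hr
  have hr0 : 0 < r := by positivity
  obtain ⟨M, hM⟩ := cd_bdd e he0 ha hr0 (by rw [hr]; linarith)
  have hs : Summable fun n : ℕ => ((starRingEnd ℂ) z) ^ n • e n := by
    have hg : Summable fun n : ℕ => M * (‖z‖ / r) ^ n :=
      (summable_geometric_of_lt_one (by positivity)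
        (by rw [div_lt_one hr0, hr]; linarith)).mul_left M
    refine hg.of_norm_bounded fun n => ?_
    rw [norm_smul, norm_pow, RCLike.norm_conj, div_pow]
    have h1 := hM n
    have h2 : 0 < r ^ n := by positivity
    calc ‖z‖ ^ n * ‖e n‖ = (r ^ n * ‖e n‖) * (‖z‖ ^ n / r ^ n) := by field_simp
      _ ≤ M * (‖z‖ ^ n / r ^ n) := by gcongr
  refine ⟨∑' n : ℕ, ((starRingEnd ℂ) z) ^ n • e n, fun Λ => ?_⟩
  rw [Λ.map_tsum hs, Complex.conj_tsum, cauchyDualFn]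
  congr 1
  ext n
  rw [map_smul, smul_eq_mul, map_mul, map_pow, Complex.conj_conj, mul_comm]
end CD


theorem hMean_le_of_hardyNorm {p : ℝ} (hp : 0 < p) {f : ℂ → ℂ} (hf : MemHp p f) {N : ℝ}
    (hN : hardyNorm p f ≤ N) {r : ℝ} (h0 : 0 < r) (h1 : r < 1) :
    hMean p f r ≤ N ^ (1 / min 1 (1 / p)) := by
  have hm : 0 < min 1 (1 / p) := lt_min one_pos (by positivity)
  have hle : hMean p f r ≤ sSup (hMean p f '' Set.Ioo 0 1) := le_csSup hf.2 ⟨r, ⟨h0, h1⟩, rfl⟩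
  have hr0 : 0 ≤ hMean p f r := integral_nonneg fun θ => Real.rpow_nonneg (norm_nonneg _) _
  have hs0 := hr0.trans hle
  refine hle.trans ?_
  have h2 := Real.rpow_le_rpow (Real.rpow_nonneg hs0 _) hN (one_div_pos.2 hm).le
  rw [← Real.rpow_mul hs0, mul_one_div_cancel hm.ne', Real.rpow_one] at h2
  exact h2

theorem Xdual_inter_theta_Smirnov_wstar_closed
    {X : Type*} [NormedAddCommGroup X] [NormedSpace ℂ X] [CompleteSpace X]
    (T : X →ₗ[ℂ] (ℂ → ℂ)) (hinj : Function.Injective T)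
    (han : ∀ x : X, AnalyticOnDisc (T x))
    (e : ℕ → X) (he : ∀ n : ℕ, T (e n) = fun z => z ^ n)
    (hpolydense : Dense {x : X | ∃ q : Polynomial ℂ, T x = fun z => q.eval z})
    (hmono : Filter.limsup (fun n : ℕ => ‖e n‖ ^ (1 / (n : ℝ))) Filter.atTop ≤ 1)
    (hH2 : ∀ x : X, MemHp 2 (T x))
    (hembed : ∃ C : ℝ, 0 < C ∧ ∀ x : X, hardyNorm 2 (T x) ≤ C * ‖x‖)
    (hdual : ∃ p : ℝ, 0 < p ∧ ∃ C : ℝ, 0 < C ∧ ∀ Λ : X →L[ℂ] ℂ,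
      MemHp p (cauchyDualFn e Λ) ∧ hardyNorm p (cauchyDualFn e Λ) ≤ C * ‖Λ‖)
    (ϑ : ℂ → ℂ) (hϑ : IsInner ϑ) :
    wstarClosure {Λ : X →L[ℂ] ℂ | ∃ h : ℂ → ℂ, MemSmirnov h ∧
        ∀ z ∈ uDisc, cauchyDualFn e Λ z = ϑ z * h z} ⊆
      {Λ : X →L[ℂ] ℂ | ∃ h : ℂ → ℂ, MemSmirnov h ∧
        ∀ z ∈ uDisc, cauchyDualFn e Λ z = ϑ z * h z} := by
  obtain ⟨p, hp, C, hC, hd⟩ := hdual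
  have he0 : e 0 ≠ 0 := by
    intro h
    have h1 := congrFun (he 0) 0
    rw [h, map_zero] at h1
    simp at h1
  have ha : ∀ Λ : X →L[ℂ] ℂ, AnalyticOnDisc (cauchyDualFn e Λ) := fun Λ => (hd Λ).1.1
  have hev : ∀ z ∈ uDisc, ∃ x : X, ∀ Λ : X →L[ℂ] ℂ,
      cauchyDualFn e Λ z = (starRingEnd ℂ) (Λ x) := fun z hz => cd_eval e he0 ha hz
  let S : Submodule ℂ (X →L[ℂ] ℂ) :=
    { carrier := {Λ : X →L[ℂ] ℂ | ∃ h : ℂ → ℂ, MemSmirnov h ∧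
        ∀ z ∈ uDisc, cauchyDualFn e Λ z = ϑ z * h z}
      zero_mem' := ⟨fun _ => 0, MemSmirnov.zero, fun z hz => by simp [cauchyDualFn]⟩
      add_mem' := by
        rintro Λ1 Λ2 ⟨h1, hs1, e1⟩ ⟨h2, hs2, e2⟩
        refine ⟨fun z => h1 z + h2 z, hs1.add hs2, fun z hz => ?_⟩
        obtain ⟨x, hx⟩ := hev z hz
        rw [mul_add, ← e1 z hz, ← e2 z hz, hx, hx, hx, ContinuousLinearMap.add_apply, map_add]
      smul_mem' := by
        rintro c Λ ⟨h, hs, e1⟩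
        refine ⟨fun z => (starRingEnd ℂ) c * h z, hs.const_mul _, fun z hz => ?_⟩
        obtain ⟨x, hx⟩ := hev z hz
        rw [mul_left_comm, ← e1 z hz, hx, hx, ContinuousLinearMap.smul_apply, smul_eq_mul,
          map_mul] }
  refine krein_smulian S ?_
  intro R U Λ hU hlim
  have hR : 0 ≤ R := by
    obtain ⟨Φ, hΦ⟩ := hU.exists
    exact (norm_nonneg _).trans hΦ.2
  set B : ℝ := (C * R) ^ (1 / min 1 (1 / p)) with hB
  have hB0 : 0 ≤ B := Real.rpow_nonneg (by positivity) _
  have hch : ∀ Φ : X →L[ℂ] ℂ, ∃ (h : ℂ → ℂ) (g : ℝ → ℝ), (Φ ∈ S ∧ ‖Φ‖ ≤ R) →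
      (∀ z ∈ uDisc, cauchyDualFn e Φ z = ϑ z * h z) ∧
      MemLp g 2 arcM ∧ ∫ θ, g θ ^ 2 ∂arcM ≤ 4 / p ^ 2 * B ∧
      ∀ z ∈ uDisc, 0 ≤ ∫ θ, PK z θ * g θ ∂arcM ∧
        ‖h z‖ ≤ Real.exp (∫ θ, PK z θ * g θ ∂arcM) := by
    intro Φ
    by_cases hΦ : Φ ∈ S ∧ ‖Φ‖ ≤ R
    · obtain ⟨h, hs, e1⟩ := hΦ.1
      obtain ⟨g, hg⟩ := smirnov_majorant hp hϑ hs (B := B) (by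
        intro r h0 h1
        have h2 := hMean_le_of_hardyNorm hp (hd Φ).1 ((hd Φ).2.trans
          (mul_le_mul_of_nonneg_left hΦ.2 hC.le)) h0 h1
        refine le_trans (le_of_eq ?_) h2
        unfold hMean
        congr 1
        ext θ
        rw [e1 _ (mul_bpt_mem h0.le h1 θ)])
      exact ⟨h, g, fun _ => ⟨e1, hg⟩⟩
    · exact ⟨0, 0, fun h => absurd h hΦ⟩
  choose H G hHG using hch
  obtain ⟨g, hg, -, hgt⟩ := weak_L2 U G (K := 4 / p ^ 2 * B) (by positivity) (by
    filter_upwards [hU] with Φ hΦ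
    exact ⟨(hHG Φ hΦ).2.1, (hHG Φ hΦ).2.2.1⟩)
  have hgi : Integrable g arcM := hg.integrable (by norm_num)
  have hP : ∀ z ∈ uDisc, Tendsto (fun Φ => ∫ θ, PK z θ * G Φ θ ∂arcM) U
      (nhds (∫ θ, PK z θ * g θ ∂arcM)) := fun z hz =>
    hgt (PK z) (arcM_memLp_of_cont (continuous_PK hz))
  have hfl : ∀ z ∈ uDisc, Tendsto (fun Φ => cauchyDualFn e Φ z) U
      (nhds (cauchyDualFn e Λ z)) := by
    intro z hz
    obtain ⟨x, hx⟩ := hev z hz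
    simp only [hx]
    exact (Complex.continuous_conj.tendsto _).comp (hlim x)
  obtain ⟨h, hh, hfh, hhb⟩ := quotient_ext (f := cauchyDualFn e Λ) (ϑ := ϑ)
    (P := fun z => Real.exp (∫ θ, PK z θ * g θ ∂arcM)) (ha Λ) hϑ.1.1
    (fun c hc => inner_ne_zero hϑ hc) (by
      have h2 : ContinuousOn (fun z => Real.exp (HI g z).re) uDisc :=
        Real.continuous_exp.comp_continuousOn
          (Complex.continuous_re.comp_continuousOn (HI_analytic hgi).continuousOn)
      exact h2.congr fun z hz => by simp only [HI_re hz hgi]) (by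
      intro z hz h0
      refine tendsto_nhds_unique (hfl z hz) (tendsto_const_nhds.congr' ?_)
      filter_upwards [hU] with Φ hΦ
      rw [(hHG Φ hΦ).1 z hz, h0, zero_mul]) (by
      intro z hz h0
      refine le_of_tendsto_of_tendsto ((hfl z hz).div_const (ϑ z)).norm
        ((Real.continuous_exp.tendsto _).comp (hP z hz)) ?_
      filter_upwards [hU] with Φ hΦ
      rw [(hHG Φ hΦ).1 z hz, mul_div_cancel_left₀ _ h0]
      exact ((hHG Φ hΦ).2.2.2 z hz).2)
  refine ⟨h, smirnov_of_bound hh hgi fun z hz => ⟨?_, hhb z hz⟩, hfh⟩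
  refine ge_of_tendsto (hP z hz) ?_
  filter_upwards [hU] with Φ hΦ
  exact ((hHG Φ hΦ).2.2.2 z hz).1
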